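/- arXiv:2409.17724 — 5 statements merged into one kernel-verified Lean document; each statement's English description precedes it below -/
import Mathlib

section
/- Every graph G of order n with fewer than 2n-3 edges has an independent cut, i.e., there is an independent set S of vertices of G and two vertices of G outside of S that lie in different connected components of G-S. -/
/-- `S` is a vertex cut of `G`: some two vertices outside of `S` lie in
different connected components of `G - S`. -/
def IsVertexCut {V : Type*} (G : SimpleGraph V) (S : Set V) : Prop :=
  ∃ a b : ↥(Sᶜ), ¬ (G.induce Sᶜ).Reachable a b

/-- An independent cut is a vertex cut that is an independent set. -/
def IsIndependentCut {V : Type*} (G : SimpleGraph V) (S : Set V) : Prop :=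
  IsVertexCut G S ∧ ∀ a ∈ S, ∀ b ∈ S, ¬ G.Adj a b

open Classical in
/-- Ordered pairs of adjacent vertices inside `A`. -/
noncomputable def adjPairs {V : Type*} (G : SimpleGraph V) (A : Finset V) : Finset (V × V) :=
  (A ×ˢ A).filter (fun p => G.Adj p.1 p.2)

open Classical in
theorem adjPairs_even {V : Type*} (G : SimpleGraph V) (A : Finset V) :
    (adjPairs G A).card % 2 = 0 := by
  have h : ∑ p ∈ adjPairs G A, (1 : ZMod 2) = 0 := by
    refine Finset.sum_involution (fun p _ => p.swap) ?_ ?_ ?_ ?_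
    · intro p _; decide
    · rintro ⟨a, b⟩ hp _ heq
      simp only [adjPairs, Finset.mem_filter] at hp
      simp only [Prod.swap_prod_mk, Prod.mk.injEq] at heq
      exact hp.2.ne heq.2
    · rintro ⟨a, b⟩ hp
      simp only [adjPairs, Finset.mem_filter, Finset.mem_product, Prod.swap_prod_mk] at hp ⊢
      exact ⟨⟨hp.1.2, hp.1.1⟩, hp.2.symm⟩
    · rintro ⟨a, b⟩ _; rfl
  simp only [Finset.sum_const, nsmul_eq_mul, mul_one] at h
  exact Nat.mod_eq_zero_of_dvd ((ZMod.natCast_eq_zero_iff _ _).1 h)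

/-- `A \ (P ∪ Q)` is an independent cut of `G[A]` which avoids `x` or is contained in `{x}`. -/
def GoodCut {V : Type*} (G : SimpleGraph V) (A : Finset V) (x : V) (P Q : Finset V) : Prop :=
  P ⊆ A ∧ Q ⊆ A ∧ (∀ a ∈ P, a ∉ Q) ∧ P.Nonempty ∧ Q.Nonempty ∧
  (∀ a ∈ P, ∀ b ∈ Q, ¬ G.Adj a b) ∧
  (∀ a ∈ A, ∀ b ∈ A, a ∉ P → a ∉ Q → b ∉ P → b ∉ Q → ¬ G.Adj a b) ∧
  (x ∈ P ∨ x ∈ Q ∨ ∀ a ∈ A, a ∈ P ∨ a ∈ Q ∨ a = x)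

theorem GoodCut.swap {V : Type*} {G : SimpleGraph V} {A : Finset V} {x : V} {P Q : Finset V}
    (h : GoodCut G A x P Q) : GoodCut G A x Q P := by
  obtain ⟨h1, h2, h3, h4, h5, h6, h7, h8⟩ := h
  refine ⟨h2, h1, fun a ha hb => h3 a hb ha, h5, h4, fun a ha b hb hab => h6 b hb a ha hab.symm,
    fun a ha b hb p q r s => h7 a ha b hb q p s r, ?_⟩
  rcases h8 with h | h | h
  · exact Or.inr (Or.inl h)
  · exact Or.inl h
  · exact Or.inr (Or.inr fun a ha => by have := h a ha; tauto)

open Classical in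
/-- Lifting from one side of a cut `{x,u}`. -/
theorem lift_side {V : Type*} {G : SimpleGraph V} {A C D : Finset V} {x u : V}
    (hx : x ∈ A) (hu : u ∈ A) (hxu : G.Adj x u)
    (hA : ∀ a, a ∈ A ↔ a = x ∨ a = u ∨ a ∈ C ∨ a ∈ D)
    (hCD : ∀ a ∈ C, a ∉ D) (hxD : x ∉ D) (huD : u ∉ D)
    (hno : ∀ a ∈ C, ∀ b ∈ D, ¬ G.Adj a b)
    {P Q : Finset V} (h : GoodCut G (insert x (insert u C)) x P Q) :
    ∃ P Q, GoodCut G A x P Q := by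
  have key : ∀ P Q : Finset V, GoodCut G (insert x (insert u C)) x P Q → x ∉ Q → u ∉ Q →
      ∃ P Q, GoodCut G A x P Q := by
    rintro P Q ⟨h1, h2, h3, h4, h5, h6, h7, h8⟩ hxQ huQ
    have hP : ∀ a ∈ P, a = x ∨ a = u ∨ a ∈ C := fun a ha => by simpa using h1 ha
    have hQ : ∀ a ∈ Q, a ∈ C := fun a ha => by
      have : a = x ∨ a = u ∨ a ∈ C := by simpa using h2 ha
      rcases this with rfl | rfl | h
      · exact absurd ha hxQ
      · exact absurd ha huQ
      · exact h
    refine ⟨P ∪ D, Q, ?_, ?_, ?_, ?_, h5, ?_, ?_, ?_⟩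
    · intro a ha; rw [hA]; have := hP a; simp only [Finset.mem_union] at ha; tauto
    · intro a ha; rw [hA]; have := hQ a ha; tauto
    · intro a ha hq
      rcases Finset.mem_union.1 ha with h | h
      · exact h3 a h hq
      · exact hCD a (hQ a hq) h
    · exact h4.mono Finset.subset_union_left
    · intro a ha b hb hab
      rcases Finset.mem_union.1 ha with h | h
      · exact h6 a h b hb hab
      · exact hno b (hQ b hb) a h hab.symm
    · intro a ha b hb p q r s
      simp only [Finset.mem_union, not_or] at p r
      refine h7 a ?_ b ?_ p.1 q r.1 s
      · have := (hA a).1 ha; simp only [Finset.mem_insert]; tauto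
      · have := (hA b).1 hb; simp only [Finset.mem_insert]; tauto
    · rcases h8 with h | h | h
      · exact Or.inl (Finset.mem_union_left _ h)
      · exact Or.inr (Or.inl h)
      · refine Or.inr (Or.inr fun a ha => ?_)
        have h9 := h a
        have := (hA a).1 ha
        simp only [Finset.mem_insert, Finset.mem_union] at h9 ⊢
        tauto
  have hh := h
  obtain ⟨h1, h2, h3, h4, h5, h6, h7, h8⟩ := hh
  by_cases hq : x ∉ Q ∧ u ∉ Q
  · exact key P Q h hq.1 hq.2
  · refine key Q P h.swap ?_ ?_
    · intro hp
      have := h3 x hp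
      have := h6 x hp u
      tauto
    · intro hp
      have := h3 u hp
      have h9 : x ∈ Q → ¬ G.Adj u x := h6 u hp x
      have := hxu.symm
      tauto

open Classical in
theorem split_count {V : Type*} {G : SimpleGraph V} {A C D : Finset V} {x u : V}
    (hx : x ∈ A) (hu : u ∈ A)
    (hA : ∀ a, a ∈ A ↔ a = x ∨ a = u ∨ a ∈ C ∨ a ∈ D)
    (hCD : ∀ a ∈ C, a ∉ D) :
    (adjPairs G (insert x (insert u C))).card + (adjPairs G (insert x (insert u D))).card
      ≤ (adjPairs G A).card + 2 := by
  rw [← Finset.card_union_add_card_inter]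
  refine Nat.add_le_add (Finset.card_le_card ?_) ?_
  · rintro ⟨a, b⟩ h
    have := hA a
    have := hA b
    simp only [adjPairs, Finset.mem_union, Finset.mem_filter, Finset.mem_product,
      Finset.mem_insert] at h ⊢
    tauto
  · refine (Finset.card_le_card (t := {(x, u), (u, x)}) ?_).trans Finset.card_le_two
    rintro ⟨a, b⟩ h
    have := hCD a
    have := hCD b
    have h0 := G.loopless
    simp only [adjPairs, Finset.mem_inter, Finset.mem_filter, Finset.mem_product,
      Finset.mem_insert, Finset.mem_singleton, Prod.mk.injEq] at h ⊢
    have h1 : a ≠ b := h.1.2.ne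
    grind

/-- Contract `u` into `x` (on the vertex set without `u`). -/
def contr {V : Type*} (G : SimpleGraph V) (x u : V) : SimpleGraph V :=
  SimpleGraph.fromRel (fun a b => G.Adj a b ∨ (a = x ∧ G.Adj u b))

open Classical in
theorem contr_count {V : Type*} {G : SimpleGraph V} {A : Finset V} {x u v : V}
    (hx : x ∈ A) (hu : u ∈ A) (hv : v ∈ A) (hxu : G.Adj x u) (hxv : G.Adj x v) (huv : G.Adj u v) :
    (adjPairs (contr G x u) (A.erase u)).card + 4 ≤ (adjPairs G A).card := by
  have hne1 := hxu.ne
  have hne2 := hxv.ne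
  have hne3 := huv.ne
  have hT : ({(x, u), (u, x), (u, v), (v, u)} : Finset (V × V)) ⊆ adjPairs G A := by
    intro p hp
    simp only [Finset.mem_insert, Finset.mem_singleton] at hp
    rcases hp with rfl | rfl | rfl | rfl <;>
      simp [adjPairs, hx, hu, hv, hxu, hxu.symm, huv, huv.symm]
  have hc : ({(x, u), (u, x), (u, v), (v, u)} : Finset (V × V)).card = 4 := by
    rw [Finset.card_insert_of_notMem, Finset.card_insert_of_notMem, Finset.card_insert_of_notMem,
      Finset.card_singleton] <;> grind
  have hle : (adjPairs (contr G x u) (A.erase u)).card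
      ≤ (adjPairs G A \ {(x, u), (u, x), (u, v), (v, u)}).card := by
    refine Finset.card_le_card_of_injOn
      (fun p => if G.Adj p.1 p.2 then p else if p.1 = x then (u, p.2) else (p.1, u)) ?_ ?_
    · rintro ⟨a, b⟩ h
      have hs := G.symm
      have e1 := G.adj_comm a b
      have e2 := G.adj_comm a u
      have e3 := G.adj_comm v x
      simp only [adjPairs, contr, SimpleGraph.fromRel_adj, Finset.coe_filter, Finset.mem_product,
        Finset.mem_erase, Set.mem_ofPred_eq, Finset.coe_sdiff, Set.mem_sdiff, Finset.mem_coe,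
        Finset.mem_insert, Finset.mem_singleton] at h ⊢
      by_cases h1 : G.Adj a b
      · simp only [h1, if_true]
        grind
      · simp only [h1, if_false]
        by_cases h2 : a = x
        · simp only [h2, if_true]
          grind
        · simp only [h2, if_false]
          grind
    · rintro ⟨a, b⟩ h ⟨c, d⟩ h' heq
      simp only [adjPairs, contr, SimpleGraph.fromRel_adj, Finset.coe_filter, Finset.mem_product,
        Finset.mem_erase, Set.mem_ofPred_eq] at h h' heq
      have e1 := G.adj_comm a b
      have e2 := G.adj_comm c d
      grind
  have := Finset.card_sdiff_add_card_eq_card hT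
  omega

open Classical in
theorem main_aux {V : Type*} (m : ℕ) : ∀ (G : SimpleGraph V) (A : Finset V) (x : V),
    A.card = m → x ∈ A → (adjPairs G A).card + 8 ≤ 4 * A.card →
    ∃ P Q, GoodCut G A x P Q := by
  induction m using Nat.strong_induction_on with
  | _ m ih =>
  intro G A x hm hx hcard
  by_cases htri : ∃ u ∈ A, ∃ v ∈ A, G.Adj x u ∧ G.Adj x v ∧ G.Adj u v
  · obtain ⟨u, hu, v, hv, hxu, hxv, huv⟩ := htri
    have hcc := contr_count hx hu hv hxu hxv huv
    have hce := Finset.card_erase_add_one hu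
    have hne := hxu.ne
    obtain ⟨P, Q, h1, h2, h3, h4, h5, h6, h7, h8⟩ := ih (A.erase u).card (by omega)
      (contr G x u) (A.erase u) x rfl (Finset.mem_erase.2 ⟨hne, hx⟩) (by omega)
    have hPu : ∀ a ∈ P, a ∈ A ∧ a ≠ u := fun a ha => (Finset.mem_erase.1 (h1 ha)).symm
    have hQu : ∀ a ∈ Q, a ∈ A ∧ a ≠ u := fun a ha => (Finset.mem_erase.1 (h2 ha)).symm
    have hadj : ∀ a b, G.Adj a b → (contr G x u).Adj a b := fun a b h => by
      simp only [contr, SimpleGraph.fromRel_adj]; exact ⟨h.ne, Or.inl (Or.inl h)⟩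
    have hadj2 : ∀ b, b ≠ x → G.Adj u b → (contr G x u).Adj x b := fun b hb h => by
      simp only [contr, SimpleGraph.fromRel_adj]; exact ⟨hb.symm, by simp [h]⟩
    have hin : ∀ P Q : Finset V, GoodCut (contr G x u) (A.erase u) x P Q → x ∈ P →
        ∃ P Q, GoodCut G A x P Q := by
      rintro P Q ⟨h1, h2, h3, h4, h5, h6, h7, h8⟩ hxP
      have hPu : ∀ a ∈ P, a ∈ A ∧ a ≠ u := fun a ha => (Finset.mem_erase.1 (h1 ha)).symm
      have hQu : ∀ a ∈ Q, a ∈ A ∧ a ≠ u := fun a ha => (Finset.mem_erase.1 (h2 ha)).symm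
      refine ⟨insert u P, Q, ?_, ?_, ?_, ?_, h5, ?_, ?_, ?_⟩
      · intro a ha; grind
      · intro a ha; grind
      · intro a ha; grind
      · exact Finset.insert_nonempty _ _
      · intro a ha b hb hab
        rcases Finset.mem_insert.1 ha with rfl | h
        · exact h6 x hxP b hb (hadj2 b (by rintro rfl; exact h3 _ hxP hb) hab)
        · exact h6 a h b hb (hadj _ _ hab)
      · intro a ha b hb p q r s hab
        simp only [Finset.mem_insert, not_or] at p r
        exact h7 a (Finset.mem_erase.2 ⟨p.1, ha⟩) b (Finset.mem_erase.2 ⟨r.1, hb⟩) p.2 q r.2 s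
          (hadj _ _ hab)
      · exact Or.inl (Finset.mem_insert_of_mem hxP)
    by_cases hxP : x ∈ P
    · exact hin P Q ⟨h1, h2, h3, h4, h5, h6, h7, h8⟩ hxP
    by_cases hxQ : x ∈ Q
    · exact hin Q P (GoodCut.swap ⟨h1, h2, h3, h4, h5, h6, h7, h8⟩) hxQ
    -- now `{x,u}` separates `P` from `Q`
    have h9 : ∀ a ∈ A.erase u, a ∈ P ∨ a ∈ Q ∨ a = x :=
      (h8.resolve_left hxP).resolve_left hxQ
    have hA : ∀ a, a ∈ A ↔ a = x ∨ a = u ∨ a ∈ P ∨ a ∈ Q := by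
      intro a
      have := h9 a
      have := hPu a
      have := hQu a
      simp only [Finset.mem_erase] at *
      grind
    have hA' : ∀ a, a ∈ A ↔ a = x ∨ a = u ∨ a ∈ Q ∨ a ∈ P := by
      intro a; rw [hA]; tauto
    have huP : u ∉ P := fun h => (hPu u h).2 rfl
    have huQ : u ∉ Q := fun h => (hQu u h).2 rfl
    have hno : ∀ a ∈ P, ∀ b ∈ Q, ¬ G.Adj a b := fun a ha b hb hab => h6 a ha b hb (hadj _ _ hab)
    have hsc := split_count (G := G) hx hu hA h3
    have cP : (insert x (insert u P)).card = P.card + 2 := by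
      rw [Finset.card_insert_of_notMem, Finset.card_insert_of_notMem] <;> grind
    have cQ : (insert x (insert u Q)).card = Q.card + 2 := by
      rw [Finset.card_insert_of_notMem, Finset.card_insert_of_notMem] <;> grind
    have cA : A.card = P.card + Q.card + 2 := by
      have : A = insert x (insert u (P ∪ Q)) := by
        ext a; rw [hA]; simp
      rw [this, Finset.card_insert_of_notMem, Finset.card_insert_of_notMem,
        Finset.card_union_of_disjoint (Finset.disjoint_left.2 h3)] <;> grind
    have pP := h4.card_pos
    have pQ := h5.card_pos
    by_cases hcase : (adjPairs G (insert x (insert u P))).card + 8 ≤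
        4 * (insert x (insert u P)).card
    · obtain ⟨P', Q', h⟩ := ih _ (by omega) G (insert x (insert u P)) x rfl (by simp) hcase
      exact lift_side hx hu hxu hA h3 hxQ huQ hno h
    · have key : (adjPairs G (insert x (insert u Q))).card + 8 ≤
          4 * (insert x (insert u Q)).card := by
        -- parity of the number of ordered pairs
        have e1 := adjPairs_even G (insert x (insert u P))
        have e2 := adjPairs_even G (insert x (insert u Q))
        omega
      obtain ⟨P', Q', h⟩ := ih _ (by omega) G (insert x (insert u Q)) x rfl (by simp) key
      exact lift_side hx hu hxu hA' (fun a ha hb => h3 a hb ha) hxP huP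
        (fun a ha b hb hab => hno b hb a ha hab.symm) h
  · push Not at htri
    by_cases hdom : ∃ b ∈ A, b ≠ x ∧ ¬ G.Adj x b
    · obtain ⟨b, hb, hbx, hnb⟩ := hdom
      refine ⟨{x}, A.filter (fun b => b ≠ x ∧ ¬ G.Adj x b), ?_, ?_, ?_, ?_, ?_, ?_, ?_, ?_⟩
      · simpa using hx
      · exact Finset.filter_subset _ _
      · simp
      · simp
      · exact ⟨b, by simp [hb, hbx, hnb]⟩
      · simp
      · intro a ha b hb p q r s
        simp only [Finset.mem_singleton, Finset.mem_filter] at p q r s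
        exact htri a ha b hb (by tauto) (by tauto)
      · simp
    · push Not at hdom
      have h3 : 2 ≤ (A.erase x).card := by
        have h1 := Finset.card_erase_add_one hx
        by_contra hlt
        have : A.card = 2 := by omega
        have h0 : (adjPairs G A).card = 0 := by omega
        obtain ⟨b, hb⟩ : (A.erase x).Nonempty := Finset.card_pos.1 (by omega)
        rw [Finset.mem_erase] at hb
        have : (x, b) ∈ adjPairs G A := by simp [adjPairs, hx, hb.2, hdom b hb.2 hb.1]
        rw [Finset.card_eq_zero.1 h0] at this
        simp at this
      obtain ⟨a, ha, b, hb, hab⟩ := Finset.one_lt_card.1 h3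
      rw [Finset.mem_erase] at ha hb
      refine ⟨{a}, (A.erase x).erase a, ?_, ?_, ?_, ?_, ?_, ?_, ?_, ?_⟩
      · simpa using ha.2
      · exact (Finset.erase_subset _ _).trans (Finset.erase_subset _ _)
      · simp
      · simp
      · exact ⟨b, by simp [hb, hab.symm]⟩
      · intro c hc d hd
        simp only [Finset.mem_singleton, Finset.mem_erase] at hc hd
        subst hc
        exact htri c ha.2 d hd.2.2 (hdom _ ha.2 ha.1) (hdom _ hd.2.2 hd.2.1)
      · intro c hc d hd p q r s
        have e1 : c = x := by
          simp only [Finset.mem_singleton, Finset.mem_erase] at p q; tauto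
        have e2 : d = x := by
          simp only [Finset.mem_singleton, Finset.mem_erase] at r s; tauto
        subst e1; subst e2; exact G.irrefl
      · refine Or.inr (Or.inr fun c hc => ?_)
        simp only [Finset.mem_singleton, Finset.mem_erase]
        tauto

/-- Every graph of order `n` with fewer than `2n - 3` edges has an independent cut. -/
theorem every_sparse_graph_has_independent_cut
    {V : Type*} [Fintype V] (G : SimpleGraph V) [Fintype G.edgeSet]
    (h : (G.edgeFinset.card : ℤ) < 2 * Fintype.card V - 3) :
    ∃ S : Set V, IsIndependentCut G S := by
  classical
  have hcount : (adjPairs G Finset.univ).card = 2 * G.edgeFinset.card := by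
    have h1 := G.dart_card_eq_twice_card_edges
    have h2 : (adjPairs G Finset.univ).card = Fintype.card G.Dart := by
      symm
      refine Finset.card_bij (fun d _ => d.toProd) ?_ ?_ ?_
      · intro d _; simp [adjPairs, d.adj]
      · intro d _ e _ hde; exact SimpleGraph.Dart.ext _ _ hde
      · intro p hp
        simp only [adjPairs, Finset.mem_filter] at hp
        exact ⟨⟨p, hp.2⟩, Finset.mem_univ _, rfl⟩
    rw [h2, h1]
    congr!
  have hpos : 0 < Fintype.card V := by omega
  obtain ⟨x⟩ := Fintype.card_pos_iff.1 hpos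
  obtain ⟨P, Q, h1, h2, h3, ⟨a, ha⟩, ⟨b, hb⟩, h6, h7, h8⟩ :=
    main_aux _ G Finset.univ x rfl (Finset.mem_univ _) (by
      rw [hcount, Finset.card_univ]; omega)
  refine ⟨{v | v ∉ P ∧ v ∉ Q}, ⟨⟨a, by simp [ha]⟩, ⟨b, by simp [hb]⟩, ?_⟩, ?_⟩
  · rintro ⟨w⟩
    have hw : ∀ (c d : ↥({v | v ∉ P ∧ v ∉ Q}ᶜ : Set V)),
        (G.induce ({v | v ∉ P ∧ v ∉ Q}ᶜ : Set V)).Walk c d → c.1 ∈ P → d.1 ∈ P := by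
      intro c d w
      induction w with
      | nil => exact id
      | @cons c e d hce _ ih =>
        intro hc
        apply ih
        by_contra he
        have hq : e.1 ∈ Q := by
          have := e.2
          simp only [Set.mem_compl_iff, Set.mem_ofPred_eq] at this
          tauto
        exact h6 _ hc _ hq hce
    exact h3 b (hw _ _ w ha) hb
  · intro c hc d hd
    exact h7 c (Finset.mem_univ _) d (Finset.mem_univ _) hc.1 hc.2 hd.1 hd.2
end

section
/- If a graph G of order n has fewer than (11/5)n - 18/5 edges, then G has a forest cut. -/
/-- A forest cut is a vertex cut whose induced subgraph is a forest. -/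
def IsForestCut {V : Type*} (G : SimpleGraph V) (S : Set V) : Prop :=
  IsVertexCut G S ∧ (G.induce S).IsAcyclic


set_option linter.unusedSectionVars false
namespace FCut
open SimpleGraph
variable {V : Type*}

/-- The restriction of `G` to the vertex set `T`, as a graph on the whole type. -/
def restr (G : SimpleGraph V) (T : Finset V) : SimpleGraph V where
  Adj x y := G.Adj x y ∧ x ∈ T ∧ y ∈ T
  symm := ⟨fun _ _ h => ⟨h.1.symm, h.2.2, h.2.1⟩⟩
  loopless := ⟨fun _ h => G.loopless.irrefl _ h.1⟩

/-- `T` induces a forest in `G`. -/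
def Acyc (G : SimpleGraph V) (T : Finset V) : Prop := (restr G T).IsAcyclic

lemma Acyc.mono {G G' : SimpleGraph V} {T T' : Finset V} (h : Acyc G' T')
    (hT : T ⊆ T') (hG : ∀ x ∈ T, ∀ y ∈ T, G.Adj x y → G'.Adj x y) : Acyc G T :=
  IsAcyclic.anti (G' := restr G' T')
    (fun x y hxy => ⟨hG x hxy.2.1 y hxy.2.2 hxy.1, hT hxy.2.1, hT hxy.2.2⟩) h

lemma not_reachable_of_isolated {R : SimpleGraph V} {v a : V} (hv : ∀ x, ¬ R.Adj v x)
    (hne : v ≠ a) : ¬ R.Reachable v a := by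
  rintro ⟨p⟩
  cases p with
  | nil => exact hne rfl
  | cons h _ => exact hv _ h

lemma acyc_of_isolated_edge {R : SimpleGraph V} {v a : V} (hR : R.IsAcyclic)
    (hv : ∀ x, ¬ R.Adj v x) : (R ⊔ edge v a).IsAcyclic := by
  by_cases hne : v = a
  · subst hne; simpa using hR
  · exact hR.sup_edge_of_not_reachable (not_reachable_of_isolated hv hne)

lemma acyc_empty (G : SimpleGraph V) : Acyc G ∅ := by
  unfold Acyc
  convert isAcyclic_bot
  ext x y; simp [restr]

variable [DecidableEq V]

lemma acyc_insert {G : SimpleGraph V} {T : Finset V} {v : V} (h : Acyc G T)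
    (hv : ∀ x ∈ T, ∀ y ∈ T, G.Adj v x → G.Adj v y → x = y) : Acyc G (insert v T) := by
  by_cases hvT : v ∈ T
  · rwa [Finset.insert_eq_of_mem hvT]
  have hiso : ∀ x, ¬ (restr G T).Adj v x := fun x hx => hvT hx.2.1
  by_cases hex : ∃ a ∈ T, G.Adj v a
  · obtain ⟨a, ha, hva⟩ := hex
    refine IsAcyclic.anti ?_ (acyc_of_isolated_edge (a := a) h hiso)
    rintro x y ⟨hxy, hx, hy⟩
    rw [sup_adj, edge_adj]
    simp only [Finset.mem_insert] at hx hy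
    have := hxy.ne
    rcases hx with rfl | hx <;> rcases hy with rfl | hy
    · exact absurd rfl this
    · right; exact ⟨Or.inl ⟨rfl, hv y hy a ha hxy hva⟩, this⟩
    · right; exact ⟨Or.inr ⟨hv x hx a ha hxy.symm hva, rfl⟩, this⟩
    · left; exact ⟨hxy, hx, hy⟩
  · push Not at hex
    refine IsAcyclic.anti ?_ h
    rintro x y ⟨hxy, hx, hy⟩
    simp only [Finset.mem_insert] at hx hy
    rcases hx with rfl | hx <;> rcases hy with rfl | hy
    · exact absurd rfl hxy.ne
    · exact absurd hxy (hex y hy)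
    · exact absurd hxy.symm (hex x hx)
    · exact ⟨hxy, hx, hy⟩

/-- Subdividing an edge of a forest. -/
lemma acyc_subdiv {G G' : SimpleGraph V} {S : Finset V} {v a c : V} (h : Acyc G' S)
    (hG : ∀ x ∈ S, ∀ y ∈ S, G.Adj x y → G'.Adj x y) (hv : v ∉ S) (ha : a ∈ S) (hc : c ∈ S)
    (hac : a ≠ c) (hac' : G'.Adj a c) (hacG : ¬ G.Adj a c)
    (hN : ∀ x ∈ S, G.Adj v x → x = a ∨ x = c) : Acyc G (insert v S) := by
  have hva : v ≠ a := by rintro rfl; exact hv ha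
  have hvc : v ≠ c := by rintro rfl; exact hv hc
  have h1 : (restr G S ⊔ edge a c).IsAcyclic := by
    refine IsAcyclic.anti ?_ h
    intro x y hxy
    rw [sup_adj, edge_adj] at hxy
    rcases hxy with hxy | ⟨⟨rfl, rfl⟩ | ⟨rfl, rfl⟩, _⟩
    · exact ⟨hG x hxy.2.1 y hxy.2.2 hxy.1, hxy.2⟩
    · exact ⟨hac', ha, hc⟩
    · exact ⟨hac'.symm, hc, ha⟩
  have h0 : (restr G S).IsAcyclic := h1.anti le_sup_left
  have h2 : ((restr G S ⊔ edge a c) ⊔ edge v a).IsAcyclic := by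
    refine acyc_of_isolated_edge h1 ?_
    intro x hx
    rw [sup_adj, edge_adj] at hx
    rcases hx with hx | ⟨⟨h, _⟩ | ⟨h, _⟩, _⟩
    · exact hv hx.2.1
    · exact hva h
    · exact hvc h
  have h3 : (restr G S ⊔ edge v a).IsAcyclic :=
    acyc_of_isolated_edge h0 (fun x hx => hv hx.2.1)
  have h4 : ((restr G S ⊔ edge v a) ⊔ edge a c).IsAcyclic := by
    rwa [sup_right_comm]
  rw [isAcyclic_sup_fromEdgeSet_iff] at h4
  have hva' : (restr G S ⊔ edge v a).Adj v a := by
    rw [sup_adj, edge_adj]; right; exact ⟨Or.inl ⟨rfl, rfl⟩, hva⟩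
  have h5 : ¬ (restr G S ⊔ edge v a).Reachable v c := by
    intro hr
    rcases h4.2 (hva'.symm.reachable.trans hr) with h | h
    · exact hac h
    · rw [sup_adj, edge_adj] at h
      rcases h with h | ⟨⟨h, _⟩ | ⟨_, h⟩, _⟩
      · exact hacG h.1
      · exact hva h.symm
      · exact hvc h.symm
  refine IsAcyclic.anti ?_ (h3.sup_edge_of_not_reachable h5)
  rintro x y ⟨hxy, hx, hy⟩
  rw [sup_adj, sup_adj, edge_adj, edge_adj]
  have hne := hxy.ne
  simp only [Finset.mem_insert] at hx hy
  rcases hx with rfl | hx <;> rcases hy with rfl | hy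
  · exact absurd rfl hne
  · rcases hN y hy hxy with rfl | rfl <;> simp [hne]
  · rcases hN x hx hxy.symm with rfl | rfl <;> simp [hne]
  · left; left; exact ⟨hxy, hx, hy⟩

lemma acyc_card_le_two {G : SimpleGraph V} {T : Finset V} (h : T.card ≤ 2) : Acyc G T := by
  induction T using Finset.induction_on with
  | empty => exact acyc_empty G
  | insert v T hv ih =>
    rw [Finset.card_insert_of_notMem hv] at h
    refine acyc_insert (ih (by omega)) ?_
    intro x hx y hy _ _
    exact Finset.card_le_one.1 (by omega) x hx y hy

lemma tri_of_not_acyc {G : SimpleGraph V} {a b c : V} (h : ¬ Acyc G {a, b, c}) :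
    G.Adj a b ∧ G.Adj a c ∧ G.Adj b c := by
  have key : ∀ a b c : V, ¬ Acyc G {a, b, c} → G.Adj a b ∧ G.Adj a c := by
    intro a b c h
    by_contra hcon
    apply h
    apply acyc_insert (acyc_card_le_two Finset.card_le_two)
    intro x hx y hy hax hay
    simp only [Finset.mem_insert, Finset.mem_singleton] at hx hy
    rcases hx with rfl | rfl <;> rcases hy with rfl | rfl <;> tauto
  have h2 := key b a c (by rwa [Finset.insert_comm])
  exact ⟨(key a b c h).1, (key a b c h).2, h2.2⟩

lemma set_bacd (a b c d : V) : ({a, b, c, d} : Finset V) = {b, a, c, d} := by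
  ext; simp; tauto

lemma set_cabd (a b c d : V) : ({a, b, c, d} : Finset V) = {c, a, b, d} := by
  ext; simp; tauto

lemma set_dabc (a b c d : V) : ({a, b, c, d} : Finset V) = {d, a, b, c} := by
  ext; simp; tauto

lemma set_abdc (a b c d : V) : ({a, b, c, d} : Finset V) = {a, b, d, c} := by
  ext; simp; tauto

lemma set_acdb (a b c d : V) : ({a, b, c, d} : Finset V) = {a, c, d, b} := by
  ext; simp; tauto

lemma set_bcda (a b c d : V) : ({a, b, c, d} : Finset V) = {b, c, d, a} := by
  ext; simp; tauto

lemma set_acbd (a b c d : V) : ({a, b, c, d} : Finset V) = {a, c, b, d} := by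
  ext; simp; tauto

/-- A non-forest on four vertices: either a triangle plus a vertex with at most one neighbour,
or every vertex misses at most one other. -/
lemma four_of_not_acyc {G : SimpleGraph V} {T : Finset V} (hT : T.card = 4) (h : ¬ Acyc G T) :
    (∃ a b c d, T = {a, b, c, d} ∧ a ≠ b ∧ a ≠ c ∧ a ≠ d ∧ b ≠ c ∧ b ≠ d ∧ c ≠ d ∧
      G.Adj a b ∧ G.Adj a c ∧ G.Adj b c) ∨
    (∃ a b c d, T = {a, b, c, d} ∧ a ≠ b ∧ a ≠ c ∧ a ≠ d ∧ b ≠ c ∧ b ≠ d ∧ c ≠ d ∧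
      G.Adj a b ∧ G.Adj b c ∧ G.Adj c d ∧ G.Adj d a) := by
  obtain ⟨a, b, c, d, hab, hac, had, hbc, hbd, hcd, rfl⟩ := Finset.card_eq_four.1 hT
  have key : ∀ a b c d : V, ¬ Acyc G {a, b, c, d} →
      (G.Adj b c ∧ G.Adj b d ∧ G.Adj c d) ∨ (G.Adj a b ∧ G.Adj a c) ∨ (G.Adj a b ∧ G.Adj a d) ∨
       (G.Adj a c ∧ G.Adj a d) := by
    intro a b c d h
    by_contra hcon
    apply h
    have : Acyc G {b, c, d} := by
      by_contra h3
      exact hcon (Or.inl (tri_of_not_acyc h3))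
    apply acyc_insert this
    intro x hx y hy hax hay
    simp only [Finset.mem_insert, Finset.mem_singleton] at hx hy
    rcases hx with rfl | rfl | rfl <;> rcases hy with rfl | rfl | rfl <;> tauto
  have e1 := set_bacd a b c d
  have e2 := set_cabd a b c d
  have e3 := set_dabc a b c d
  have k0 := key _ _ _ _ h
  have k1 := key _ _ _ _ (e1 ▸ h)
  have k2 := key _ _ _ _ (e2 ▸ h)
  have k3 := key _ _ _ _ (e3 ▸ h)
  clear key h hT e1 e2 e3
  simp only [G.adj_comm b a, G.adj_comm c a, G.adj_comm d a, G.adj_comm c b, G.adj_comm d b,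
    G.adj_comm d c] at k0 k1 k2 k3
  by_cases t1 : G.Adj a b ∧ G.Adj a c ∧ G.Adj b c
  · left; exact ⟨a, b, c, d, rfl, hab, hac, had, hbc, hbd, hcd, t1⟩
  by_cases t2 : G.Adj a b ∧ G.Adj a d ∧ G.Adj b d
  · left
    exact ⟨a, b, d, c, set_abdc a b c d, hab, had, hac, hbd, hbc, hcd.symm, t2⟩
  by_cases t3 : G.Adj a c ∧ G.Adj a d ∧ G.Adj c d
  · left
    exact ⟨a, c, d, b, set_acdb a b c d, hac, had, hab, hcd, hbc.symm, hbd.symm, t3⟩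
  by_cases t4 : G.Adj b c ∧ G.Adj b d ∧ G.Adj c d
  · left
    exact ⟨b, c, d, a, set_bcda a b c d, hbc, hbd, hab.symm, hcd, hac.symm, had.symm, t4⟩
  right
  by_cases m1 : G.Adj a b
  · by_cases m2 : G.Adj a c
    · refine ⟨a, b, d, c, set_abdc a b c d, hab, had, hac, hbd, hbc, hcd.symm, ?_⟩
      simp only [G.adj_comm c a, G.adj_comm d c]
      clear hab hac had hbc hbd hcd; grind only
    · refine ⟨a, b, c, d, rfl, hab, hac, had, hbc, hbd, hcd, ?_⟩
      simp only [G.adj_comm d a]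
      clear hab hac had hbc hbd hcd; grind only
  · refine ⟨a, c, b, d, set_acbd a b c d, hac, hab, had, hbc.symm, hcd, hbd, ?_⟩
    simp only [G.adj_comm d a, G.adj_comm c b]
    clear hab hac had hbc hbd hcd; grind only


/-- A forest cut of the graph `G` with vertex set `W`, given by the two sides. -/
def FC (G : SimpleGraph V) (W : Finset V) : Prop :=
  ∃ A B : Finset V, A ⊆ W ∧ B ⊆ W ∧ A.Nonempty ∧ B.Nonempty ∧ Disjoint A B ∧
    (∀ a ∈ A, ∀ b ∈ B, ¬ G.Adj a b) ∧ Acyc G (W \ (A ∪ B))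

/-- number of edges -/
noncomputable def ec (G : SimpleGraph V) : ℕ := G.edgeSet.ncard

/-- neighbourhood -/
noncomputable def nb [Fintype V] (G : SimpleGraph V) (v : V) : Finset V :=
  (Set.toFinite (G.neighborSet v)).toFinset

/-- A minimal potential counterexample. -/
structure Ctx (G : SimpleGraph V) (W : Finset V) : Prop where
  ih : ∀ (G' : SimpleGraph V) (W' : Finset V), W'.card < W.card → (∀ x y, G'.Adj x y → x ∈ W') →
    5 * ec G' + 18 < 11 * W'.card → FC G' W'
  supp : ∀ x y, G.Adj x y → x ∈ W
  lt : 5 * ec G + 18 < 11 * W.card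

/-- Delete the vertices in `X` and add the edges in `E`. -/
def red (G : SimpleGraph V) (X : Finset V) (E : Finset (Sym2 V)) : SimpleGraph V where
  Adj x y := x ≠ y ∧ x ∉ X ∧ y ∉ X ∧ (G.Adj x y ∨ s(x, y) ∈ E)
  symm := ⟨fun x y h => ⟨h.1.symm, h.2.2.1, h.2.1, by
    rw [G.adj_comm, Sym2.eq_swap]; exact h.2.2.2⟩⟩
  loopless := ⟨fun _ h => h.1 rfl⟩

variable [Fintype V] {G : SimpleGraph V} {W : Finset V}

@[simp] lemma mem_nb {v x : V} : x ∈ nb G v ↔ G.Adj v x := by simp [nb]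

lemma sum_deg : ∑ v, (nb G v).card = 2 * ec G := by
  classical
  have h := G.sum_degrees_eq_twice_card_edges
  have h1 : ec G = G.edgeFinset.card := by
    rw [ec, ← G.coe_edgeFinset, Set.ncard_coe_finset]
  rw [h1, ← h]
  refine Finset.sum_congr rfl fun v _ => ?_
  rw [← G.card_neighborFinset_eq_degree]
  congr 1
  ext x; simp

lemma ec_red {X : Finset V} {E L : Finset (Sym2 V)}
    (hL : ∀ e ∈ L, e ∈ G.edgeSet ∧ ∃ x ∈ X, x ∈ e) :
    ec (red G X E) + L.card ≤ ec G + E.card := by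
  have h1 : (red G X E).edgeSet ∪ (L : Set (Sym2 V)) ⊆ G.edgeSet ∪ (E : Set (Sym2 V)) := by
    rintro e (he | he)
    · induction e with | h x y =>
      have := ((red G X E).mem_edgeSet).1 he
      rcases this.2.2.2 with h | h
      · left; exact h
      · right; exact h
    · left; exact (hL e he).1
  have h2 : Disjoint (red G X E).edgeSet (L : Set (Sym2 V)) := by
    rw [Set.disjoint_left]
    intro e he heL
    obtain ⟨_, x, hx, hxe⟩ := hL e heL
    induction e with | h a b =>
    have := ((red G X E).mem_edgeSet).1 he
    rcases Sym2.mem_iff.1 hxe with rfl | rfl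
    · exact this.2.1 hx
    · exact this.2.2.1 hx
  have h3 := Set.ncard_le_ncard h1 (Set.toFinite _)
  rw [Set.ncard_union_eq h2 (Set.toFinite _) (Set.toFinite _), Set.ncard_coe_finset] at h3
  have h4 := Set.ncard_union_le G.edgeSet (E : Set (Sym2 V))
  rw [Set.ncard_coe_finset] at h4
  exact h3.trans h4

lemma Ctx.red_FC (C : Ctx G W) {X : Finset V} {E L : Finset (Sym2 V)} (hX : X ⊆ W)
    (hX0 : X.Nonempty) (hE : ∀ x y, s(x, y) ∈ E → x ∈ W)
    (hL : ∀ e ∈ L, e ∈ G.edgeSet ∧ ∃ x ∈ X, x ∈ e)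
    (hc : 11 * X.card + 5 * E.card ≤ 5 * L.card) : FC (red G X E) (W \ X) := by
  have h1 := Finset.card_sdiff_add_card_eq_card hX
  have h2 := hX0.card_pos
  have h3 := ec_red (E := E) hL
  have h4 := C.lt
  refine C.ih _ _ (by omega) ?_ (by omega)
  rintro x y ⟨_, hx, hy, h | h⟩
  · exact Finset.mem_sdiff.2 ⟨C.supp _ _ h, hx⟩
  · exact Finset.mem_sdiff.2 ⟨hE _ _ h, hx⟩

lemma FC_extend {X A B : Finset V} {E : Finset (Sym2 V)} (hX : X ⊆ W)
    (hA : A ⊆ W \ X) (hB : B ⊆ W \ X)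
    (hA0 : A.Nonempty) (hB0 : B.Nonempty) (hAB : Disjoint A B)
    (hadj : ∀ a ∈ A, ∀ b ∈ B, ¬ (red G X E).Adj a b)
    (hac : Acyc (red G X E) ((W \ X) \ (A ∪ B)))
    (hN : ∀ x ∈ X, ∀ y ∈ A, ¬ G.Adj x y) : FC G W := by
  have hA1 : ∀ a ∈ A, a ∉ X := fun a ha => (Finset.mem_sdiff.1 (hA ha)).2
  have hB1 : ∀ a ∈ B, a ∉ X := fun a ha => (Finset.mem_sdiff.1 (hB ha)).2
  refine ⟨A, B ∪ X, hA.trans Finset.sdiff_subset,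
    Finset.union_subset (hB.trans Finset.sdiff_subset) hX, hA0,
    hB0.mono Finset.subset_union_left, ?_, ?_, ?_⟩
  · rw [Finset.disjoint_union_right]
    exact ⟨hAB, Finset.disjoint_left.2 hA1⟩
  · intro a ha b hb hab
    rcases Finset.mem_union.1 hb with hb | hb
    · exact hadj a ha b hb ⟨hab.ne, hA1 a ha, hB1 b hb, Or.inl hab⟩
    · exact hN b hb a ha hab.symm
  · refine hac.mono ?_ ?_
    · intro x hx
      simp only [Finset.mem_sdiff, Finset.mem_union] at hx ⊢
      tauto
    · intro x hx y hy hxy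
      simp only [Finset.mem_sdiff, Finset.mem_union] at hx hy
      exact ⟨hxy.ne, by tauto, by tauto, Or.inl hxy⟩

lemma Ctx.clique_red (C : Ctx G W) {X N : Finset V} {E L : Finset (Sym2 V)} (hX : X ⊆ W)
    (hX0 : X.Nonempty) (hE : ∀ x y, s(x, y) ∈ E → x ∈ W)
    (hL : ∀ e ∈ L, e ∈ G.edgeSet ∧ ∃ x ∈ X, x ∈ e)
    (hc : 11 * X.card + 5 * E.card ≤ 5 * L.card)
    (hN : ∀ x ∈ X, ∀ y, y ∉ X → G.Adj x y → y ∈ N)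
    (hclq : ∀ x ∈ N, ∀ y ∈ N, x ≠ y → G.Adj x y ∨ s(x, y) ∈ E) : FC G W := by
  obtain ⟨A, B, hA, hB, hA0, hB0, hAB, hadj, hac⟩ := C.red_FC hX hX0 hE hL hc
  have hA1 : ∀ a ∈ A, a ∉ X := fun a ha => (Finset.mem_sdiff.1 (hA ha)).2
  have hB1 : ∀ a ∈ B, a ∉ X := fun a ha => (Finset.mem_sdiff.1 (hB ha)).2
  by_cases h : ∀ x ∈ X, ∀ y ∈ A, ¬ G.Adj x y
  · exact FC_extend hX hA hB hA0 hB0 hAB hadj hac h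
  · push Not at h
    obtain ⟨x, hx, y, hy, hxy⟩ := h
    refine FC_extend hX hB hA hB0 hA0 hAB.symm (fun a ha b hb hab => hadj b hb a ha hab.symm)
      (by rwa [Finset.union_comm]) ?_
    intro x' hx' z hz hxz
    have hyN := hN x hx y (hA1 y hy) hxy
    have hzN := hN x' hx' z (hB1 z hz) hxz
    have hyz : y ≠ z := fun h => Finset.disjoint_left.1 hAB hy (h ▸ hz)
    exact hadj y hy z hz ⟨hyz, hA1 y hy, hB1 z hz, hclq y hyN z hzN hyz⟩

/-- The neighbourhood of a small set `X` is a forest cut if acyclic. -/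
lemma FC_nbhd {X N : Finset V} (hX : X ⊆ W) (hX0 : X.Nonempty) 
    (hN : ∀ x ∈ X, ∀ y, y ∉ X → G.Adj x y → y ∈ N) (hac : Acyc G N)
    (hcard : X.card + N.card < W.card) : FC G W := by
  refine ⟨X, W \ (X ∪ N), hX, Finset.sdiff_subset, hX0, ?_, ?_, ?_, ?_⟩
  · rw [← Finset.card_pos]
    have := Finset.le_card_sdiff (X ∪ N) W
    have := Finset.card_union_le X N
    omega
  · rw [Finset.disjoint_left]
    intro a ha hb
    simp only [Finset.mem_sdiff, Finset.mem_union] at hb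
    tauto
  · intro a ha b hb hab
    simp only [Finset.mem_sdiff, Finset.mem_union, not_or] at hb
    exact hb.2.2 (hN a ha b hb.2.1 hab)
  · refine hac.mono ?_ (fun _ _ _ _ h => h)
    intro x hx
    simp only [Finset.mem_sdiff, Finset.mem_union] at hx
    tauto

/-- edges at one vertex -/
lemma edges_one (v : V) : ∃ L : Finset (Sym2 V),
    (∀ e ∈ L, e ∈ G.edgeSet ∧ ∃ x ∈ ({v} : Finset V), x ∈ e) ∧ L.card = (nb G v).card := by
  refine ⟨(nb G v).image (fun x => s(v, x)), ?_, ?_⟩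
  · intro e he
    obtain ⟨x, hx, rfl⟩ := Finset.mem_image.1 he
    exact ⟨mem_nb.1 hx, v, by simp, by simp⟩
  · apply Finset.card_image_of_injective
    intro x y hxy
    exact Sym2.congr_right.1 hxy

lemma edges_two {v a : V} (hva : G.Adj v a) : ∃ L : Finset (Sym2 V),
    (∀ e ∈ L, e ∈ G.edgeSet ∧ ∃ x ∈ ({v, a} : Finset V), x ∈ e) ∧
    L.card + 1 = (nb G v).card + (nb G a).card := by
  refine ⟨(nb G v).image (fun x => s(v, x)) ∪ ((nb G a).erase v).image (fun x => s(a, x)), ?_, ?_⟩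
  · intro e he
    rcases Finset.mem_union.1 he with he | he
    · obtain ⟨x, hx, rfl⟩ := Finset.mem_image.1 he
      exact ⟨mem_nb.1 hx, v, by simp, by simp⟩
    · obtain ⟨x, hx, rfl⟩ := Finset.mem_image.1 he
      exact ⟨mem_nb.1 (Finset.mem_of_mem_erase hx), a, by simp, by simp⟩
  · rw [Finset.card_union_of_disjoint, Finset.card_image_of_injective,
      Finset.card_image_of_injective, add_assoc, Finset.card_erase_add_one]
    · exact mem_nb.2 hva.symm
    · intro x y hxy; exact Sym2.congr_right.1 hxy
    · intro x y hxy; exact Sym2.congr_right.1 hxy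
    · rw [Finset.disjoint_left]
      intro e he he'
      obtain ⟨x, hx, rfl⟩ := Finset.mem_image.1 he
      obtain ⟨y, hy, hxy⟩ := Finset.mem_image.1 he'
      have hyv := Finset.ne_of_mem_erase hy
      have := hva.ne
      rw [Sym2.eq_iff] at hxy
      rcases hxy with ⟨h, _⟩ | ⟨_, h⟩
      · exact this h.symm
      · exact hyv h

/-- Vertices of degree at most three. -/
lemma Ctx.deg_three (C : Ctx G W) {v : V} (hv : v ∈ W) (hd : (nb G v).card ≤ 3)
    (hd' : (nb G v).card + 1 < W.card) : FC G W := by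
  have hN : ∀ x ∈ ({v} : Finset V), ∀ y, y ∉ ({v} : Finset V) → G.Adj x y → y ∈ nb G v := by
    intro x hx y _ hxy
    rw [Finset.mem_singleton] at hx
    subst hx; simpa using hxy
  have hX : ({v} : Finset V) ⊆ W := by simpa using hv
  by_cases hac : Acyc G (nb G v)
  · exact FC_nbhd hX (by simp) hN hac (by simp; omega)
  · have h3 : (nb G v).card = 3 := by
      by_contra h
      exact hac (acyc_card_le_two (by omega))
    obtain ⟨L, hL, hLc⟩ := edges_one (G := G) v
    refine C.clique_red (E := ∅) hX (by simp) (by simp) hL (by simp; omega) hN ?_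
    obtain ⟨a, b, c, hab, hac', hbc, habc⟩ := Finset.card_eq_three.1 h3
    rw [habc] at hac ⊢
    obtain ⟨h1, h2, h3⟩ := tri_of_not_acyc hac
    intro x hx y hy hxy
    left
    simp only [Finset.mem_insert, Finset.mem_singleton] at hx hy
    rcases hx with rfl | rfl | rfl <;> rcases hy with rfl | rfl | rfl <;>
      first | exact absurd rfl hxy | assumption | (apply SimpleGraph.Adj.symm; assumption)

/-- Degree four, at most one nonadjacent pair `p, q` in the neighbourhood. -/
lemma Ctx.diamond (C : Ctx G W) {v p q : V} (hv : v ∈ W) (hd : (nb G v).card = 4)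
    (hp : p ∈ W) (hq : q ∈ W) (h : ∀ x ∈ nb G v, ∀ y ∈ nb G v, x ≠ y →
      G.Adj x y ∨ s(x, y) = s(p, q)) : FC G W := by
  obtain ⟨L, hL, hLc⟩ := edges_one (G := G) v
  refine C.clique_red (X := {v}) (N := nb G v) (E := {s(p, q)}) (by simpa using hv) (by simp) ?_ hL
    (by simp; omega) ?_ ?_
  · intro x y hxy
    rw [Finset.mem_singleton, Sym2.eq_iff] at hxy
    rcases hxy with ⟨rfl, _⟩ | ⟨rfl, _⟩ <;> assumption
  · intro x hx y _ hxy
    rw [Finset.mem_singleton] at hx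
    subst hx; simpa using hxy
  · simpa using h

lemma Ctx.four_cycle (C : Ctx G W) {v a b c d : V} (hv : v ∈ W) (hn : nb G v = {a, b, c, d})
    (hac : a ≠ c) (hd : (nb G v).card = 4)
    (h1 : G.Adj a b) (h2 : G.Adj b c) (h3 : G.Adj c d) (h4 : G.Adj d a) : FC G W := by
  have memW : ∀ x ∈ nb G v, x ∈ W := fun x hx => C.supp _ _ (mem_nb.1 hx).symm
  have ha : a ∈ W := memW a (by rw [hn]; simp)
  have hb : b ∈ W := memW b (by rw [hn]; simp)
  have hc : c ∈ W := memW c (by rw [hn]; simp)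
  have hdW : d ∈ W := memW d (by rw [hn]; simp)
  have hva : G.Adj v a := mem_nb.1 (by rw [hn]; simp)
  have hvc : G.Adj v c := mem_nb.1 (by rw [hn]; simp)
  by_cases hacG : G.Adj a c
  · refine C.diamond hv hd hb hdW ?_
    rw [hn]
    intro x hx y hy hxy
    simp only [Finset.mem_insert, Finset.mem_singleton] at hx hy
    rcases hx with rfl | rfl | rfl | rfl <;> rcases hy with rfl | rfl | rfl | rfl <;>
      first | exact absurd rfl hxy | (left; assumption) |
        (left; apply SimpleGraph.Adj.symm; assumption) | (right; rfl) |
        (right; exact Sym2.eq_swap)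
  obtain ⟨L, hL, hLc⟩ := edges_one (G := G) v
  have hX : ({v} : Finset V) ⊆ W := by simpa using hv
  obtain ⟨A, B, hA, hB, hA0, hB0, hAB, hadj, hacy⟩ := C.red_FC (X := {v}) (E := {s(a, c)}) hX
    (by simp) (by
      intro x y hxy
      rw [Finset.mem_singleton, Sym2.eq_iff] at hxy
      rcases hxy with ⟨rfl, _⟩ | ⟨rfl, _⟩ <;> assumption) hL (by simp; omega)
  by_cases hA2 : ∀ x ∈ ({v} : Finset V), ∀ y ∈ A, ¬ G.Adj x y
  · exact FC_extend hX hA hB hA0 hB0 hAB hadj hacy hA2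
  by_cases hB2 : ∀ x ∈ ({v} : Finset V), ∀ y ∈ B, ¬ G.Adj x y
  · exact FC_extend hX hB hA hB0 hA0 hAB.symm (fun a ha b hb hab => hadj b hb a ha hab.symm)
      (by rwa [Finset.union_comm]) hB2
  simp only [Finset.mem_singleton, forall_eq] at hA2 hB2
  push Not at hA2 hB2
  obtain ⟨y, hyA, hy⟩ := hA2
  obtain ⟨z, hzB, hz⟩ := hB2
  have hA1 : ∀ a ∈ A, a ≠ v := fun a ha => by
    have := (Finset.mem_sdiff.1 (hA ha)).2
    simpa using this
  have hB1 : ∀ a ∈ B, a ≠ v := fun a ha => by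
    have := (Finset.mem_sdiff.1 (hB ha)).2
    simpa using this
  have hnoA : ∀ p ∈ A, ∀ q ∈ B, p ≠ q ∧ ¬ G.Adj p q ∧ s(p, q) ≠ s(a, c) := by
    intro p hp q hq
    have hpq : p ≠ q := fun h => Finset.disjoint_left.1 hAB hp (h ▸ hq)
    have := hadj p hp q hq
    refine ⟨hpq, fun h => this ⟨hpq, by simpa using hA1 p hp, by simpa using hB1 q hq, Or.inl h⟩,
      fun h => this ⟨hpq, by simpa using hA1 p hp, by simpa using hB1 q hq, Or.inr (by simpa using h)⟩⟩
  have hyz := hnoA y hyA z hzB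
  have key : (y = b ∧ z = d) ∨ (y = d ∧ z = b) := by
    have hy' : y ∈ nb G v := mem_nb.2 hy
    have hz' : z ∈ nb G v := mem_nb.2 hz
    rw [hn] at hy' hz'
    simp only [Finset.mem_insert, Finset.mem_singleton] at hy' hz'
    obtain ⟨n1, n2, n3⟩ := hyz
    rcases hy' with rfl | rfl | rfl | rfl <;> rcases hz' with rfl | rfl | rfl | rfl <;>
      first
      | exact absurd rfl n1
      | exact absurd h1 n2
      | exact absurd h1.symm n2
      | exact absurd h2 n2
      | exact absurd h2.symm n2
      | exact absurd h3 n2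
      | exact absurd h3.symm n2
      | exact absurd h4 n2
      | exact absurd h4.symm n2
      | exact absurd rfl n3
      | exact absurd Sym2.eq_swap n3
      | exact Or.inl ⟨rfl, rfl⟩
      | exact Or.inr ⟨rfl, rfl⟩
  -- vertices adjacent to both sides lie in the cut
  have hmid : ∀ p, p ∈ W → p ≠ v → G.Adj p y → G.Adj p z → p ∈ (W \ {v}) \ (A ∪ B) := by
    intro p hpW hpv hpy hpz
    simp only [Finset.mem_sdiff, Finset.mem_singleton, Finset.mem_union, not_or]
    exact ⟨⟨hpW, hpv⟩, fun h => (hnoA p h z hzB).2.1 hpz, fun h => (hnoA y hyA p h).2.1 hpy.symm⟩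
  have hab2 : G.Adj a y ∧ G.Adj a z ∧ G.Adj c y ∧ G.Adj c z := by
    rcases key with ⟨rfl, rfl⟩ | ⟨rfl, rfl⟩
    · exact ⟨h1, h4.symm, h2.symm, h3⟩
    · exact ⟨h4.symm, h1, h3, h2.symm⟩
  have haS := hmid a ha hva.ne.symm hab2.1 hab2.2.1
  have hcS := hmid c hc hvc.ne.symm hab2.2.2.1 hab2.2.2.2
  refine ⟨A, B, hA.trans Finset.sdiff_subset, hB.trans Finset.sdiff_subset, hA0, hB0, hAB,
    fun p hp q hq => (hnoA p hp q hq).2.1, ?_⟩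
  have hS : Acyc G (insert v ((W \ {v}) \ (A ∪ B))) := by
    refine acyc_subdiv (a := a) (c := c) hacy ?_ (by simp) haS hcS hac ?_ hacG ?_
    · intro x hx y hy hxy
      simp only [Finset.mem_sdiff] at hx hy
      exact ⟨hxy.ne, hx.1.2, hy.1.2, Or.inl hxy⟩
    · exact ⟨hac, by simpa using hva.ne.symm, by simpa using hvc.ne.symm, Or.inr (by simp)⟩
    · intro x hx hvx
      have hx' : x ∈ nb G v := mem_nb.2 hvx
      rw [hn] at hx'
      simp only [Finset.mem_insert, Finset.mem_singleton, Finset.mem_sdiff, Finset.mem_union,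
        not_or] at hx' hx
      rcases hx' with rfl | rfl | rfl | rfl
      · exact Or.inl rfl
      · rcases key with ⟨rfl, rfl⟩ | ⟨rfl, rfl⟩
        · exact absurd hyA hx.2.1
        · exact absurd hzB hx.2.2
      · exact Or.inr rfl
      · rcases key with ⟨rfl, rfl⟩ | ⟨rfl, rfl⟩
        · exact absurd hzB hx.2.2
        · exact absurd hyA hx.2.1
  refine hS.mono ?_ (fun _ _ _ _ h => h)
  intro x hx
  simp only [Finset.mem_sdiff, Finset.mem_union, Finset.mem_insert, Finset.mem_singleton] at hx ⊢
  tauto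

lemma acyc_four {d e b c : V} (h1 : ¬ (G.Adj d b ∧ G.Adj d c)) (h2 : ¬ (G.Adj e b ∧ G.Adj e c))
    (h3 : ¬ (G.Adj d e ∧ (G.Adj d b ∨ G.Adj d c))) : Acyc G {d, e, b, c} := by
  have : Acyc G {e, b, c} := by
    by_contra h
    have := tri_of_not_acyc h
    exact h2 ⟨this.1, this.2.1⟩
  refine acyc_insert this ?_
  intro x hx y hy hdx hdy
  simp only [Finset.mem_insert, Finset.mem_singleton] at hx hy
  rcases hx with rfl | rfl | rfl <;> rcases hy with rfl | rfl | rfl <;>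
    first
    | rfl
    | exact (h1 (And.intro hdx hdy)).elim
    | exact (h1 (And.intro hdy hdx)).elim
    | exact (h3 (And.intro hdx (Or.inl hdy))).elim
    | exact (h3 (And.intro hdx (Or.inr hdy))).elim
    | exact (h3 (And.intro hdy (Or.inl hdx))).elim
    | exact (h3 (And.intro hdy (Or.inr hdx))).elim

/-- In a `K₄` at a degree four vertex `v`, the vertex `a` cannot have degree four. -/
lemma Ctx.tri_deg (C : Ctx G W) (hW : 19 ≤ W.card) {v a b c d : V} (hv : v ∈ W)
    (hn : nb G v = {a, b, c, d}) (hbc' : b ≠ c) (hbd' : b ≠ d) (hcd' : c ≠ d)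
    (hd : (nb G v).card = 4) (hab : G.Adj a b) (hac : G.Adj a c) (hbc : G.Adj b c)
    (had : (nb G a).card = 4) : FC G W := by
  have memW : ∀ x ∈ nb G v, x ∈ W := fun x hx => C.supp _ _ (mem_nb.1 hx).symm
  have haW : a ∈ W := memW a (by rw [hn]; simp)
  have hbW : b ∈ W := memW b (by rw [hn]; simp)
  have hcW : c ∈ W := memW c (by rw [hn]; simp)
  have hdW : d ∈ W := memW d (by rw [hn]; simp)
  have hva : G.Adj v a := mem_nb.1 (by rw [hn]; simp)
  have hvb : G.Adj v b := mem_nb.1 (by rw [hn]; simp)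
  have hvc : G.Adj v c := mem_nb.1 (by rw [hn]; simp)
  have hvd : G.Adj v d := mem_nb.1 (by rw [hn]; simp)
  obtain ⟨e, he, hna⟩ : ∃ e, e ∉ ({v, b, c} : Finset V) ∧ nb G a = insert e {v, b, c} := by
    have hsub : ({v, b, c} : Finset V) ⊆ nb G a := by
      intro x hx
      simp only [Finset.mem_insert, Finset.mem_singleton] at hx
      rcases hx with rfl | rfl | rfl
      · exact mem_nb.2 hva.symm
      · exact mem_nb.2 hab
      · exact mem_nb.2 hac
    have h3 : ({v, b, c} : Finset V).card = 3 := by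
      rw [Finset.card_eq_three]
      exact ⟨v, b, c, hvb.ne, hvc.ne, hbc', rfl⟩
    have h1 := Finset.card_sdiff_add_card_eq_card hsub
    obtain ⟨e, he⟩ := Finset.card_eq_one.1 (show (nb G a \ {v, b, c}).card = 1 by omega)
    have he' : e ∈ nb G a \ {v, b, c} := by rw [he]; simp
    refine ⟨e, (Finset.mem_sdiff.1 he').2, ?_⟩
    rw [← Finset.sdiff_union_of_subset hsub, he]
    rfl
  simp only [Finset.mem_insert, Finset.mem_singleton, not_or] at he
  obtain ⟨hev, heb, hec⟩ := he
  have hae : G.Adj a e := mem_nb.1 (by rw [hna]; simp)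
  have heW : e ∈ W := C.supp _ _ hae.symm
  obtain ⟨L, hL, hLc⟩ := edges_two hva
  have hX : ({v, a} : Finset V) ⊆ W := by
    intro x hx
    simp only [Finset.mem_insert, Finset.mem_singleton] at hx
    rcases hx with rfl | rfl <;> assumption
  have hXc : ({v, a} : Finset V).card = 2 := Finset.card_pair hva.ne
  have hNb : ∀ x ∈ ({v, a} : Finset V), ∀ y, y ∉ ({v, a} : Finset V) → G.Adj x y →
      y ∈ ({d, e, b, c} : Finset V) := by
    intro x hx y hy hxy
    simp only [Finset.mem_insert, Finset.mem_singleton, not_or] at hx hy ⊢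
    rcases hx with rfl | rfl
    · have := mem_nb.2 hxy
      rw [hn] at this
      simp only [Finset.mem_insert, Finset.mem_singleton] at this
      tauto
    · have := mem_nb.2 hxy
      rw [hna] at this
      simp only [Finset.mem_insert, Finset.mem_singleton] at this
      tauto
  have hEW : ∀ p q r t : V, p ∈ W → q ∈ W → r ∈ W → t ∈ W →
      ∀ x y, s(x, y) ∈ ({s(p, q), s(r, t)} : Finset (Sym2 V)) → x ∈ W := by
    intro p q r t hp hq hr ht x y hxy
    simp only [Finset.mem_insert, Finset.mem_singleton, Sym2.eq_iff] at hxy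
    rcases hxy with (⟨rfl, _⟩ | ⟨rfl, _⟩) | (⟨rfl, _⟩ | ⟨rfl, _⟩) <;> assumption
  have hEc : ∀ s t : Sym2 V, ({s, t} : Finset (Sym2 V)).card ≤ 2 := fun s t => Finset.card_le_two
  by_cases hde : d = e
  · subst hde
    have := hEc s(d, b) s(d, c)
    refine C.clique_red (N := {d, d, b, c}) (E := {s(d, b), s(d, c)}) hX (by simp)
      (hEW _ _ _ _ hdW hbW hdW hcW) hL (by omega) hNb ?_
    intro x hx y hy hxy
    simp only [Finset.mem_insert, Finset.mem_singleton] at hx hy ⊢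
    rcases hx with rfl | rfl | rfl | rfl <;> rcases hy with rfl | rfl | rfl | rfl <;>
      first
      | exact absurd rfl hxy
      | exact Or.inl hbc
      | exact Or.inl hbc.symm
      | exact Or.inr (Or.inl rfl)
      | exact Or.inr (Or.inr rfl)
      | exact Or.inr (Or.inl Sym2.eq_swap)
      | exact Or.inr (Or.inr Sym2.eq_swap)
  by_cases h1 : G.Adj d b ∧ G.Adj d c
  · obtain ⟨hdb, hdc⟩ := h1
    refine C.diamond hv hd haW hdW ?_
    rw [hn]
    intro x hx y hy hxy
    simp only [Finset.mem_insert, Finset.mem_singleton] at hx hy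
    rcases hx with rfl | rfl | rfl | rfl <;> rcases hy with rfl | rfl | rfl | rfl <;>
      first
      | exact absurd rfl hxy
      | (left; assumption)
      | (left; apply SimpleGraph.Adj.symm; assumption)
      | (right; rfl)
      | (right; exact Sym2.eq_swap)
  by_cases h2 : G.Adj e b ∧ G.Adj e c
  · obtain ⟨heb', hec'⟩ := h2
    refine C.diamond haW had heW hv ?_
    rw [hna]
    intro x hx y hy hxy
    simp only [Finset.mem_insert, Finset.mem_singleton] at hx hy
    rcases hx with rfl | rfl | rfl | rfl <;> rcases hy with rfl | rfl | rfl | rfl <;>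
      first
      | exact absurd rfl hxy
      | (left; assumption)
      | (left; apply SimpleGraph.Adj.symm; assumption)
      | (right; rfl)
      | (right; exact Sym2.eq_swap)
  have hNc : ({d, e, b, c} : Finset V).card ≤ 4 := Finset.card_le_four
  by_cases h3 : G.Adj d e ∧ (G.Adj d b ∨ G.Adj d c)
  swap
  · exact FC_nbhd hX (by simp) hNb (acyc_four h1 h2 h3) (by omega)
  by_cases h4 : G.Adj e d ∧ (G.Adj e b ∨ G.Adj e c)
  swap
  · refine FC_nbhd hX (by simp) hNb ?_ (by omega)
    rw [Finset.insert_comm]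
    exact acyc_four h2 h1 h4
  have hde' := h3.1
  obtain ⟨p, hpW, hp1, hp2⟩ : ∃ p, p ∈ W ∧ (G.Adj d b ∨ b = p) ∧ (G.Adj d c ∨ c = p) := by
    rcases h3.2 with h | h
    · exact ⟨c, hcW, Or.inl h, Or.inr rfl⟩
    · exact ⟨b, hbW, Or.inr rfl, Or.inl h⟩
  obtain ⟨q, hqW, hq1, hq2⟩ : ∃ q, q ∈ W ∧ (G.Adj e b ∨ b = q) ∧ (G.Adj e c ∨ c = q) := by
    rcases h4.2 with h | h
    · exact ⟨c, hcW, Or.inl h, Or.inr rfl⟩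
    · exact ⟨b, hbW, Or.inr rfl, Or.inl h⟩
  have := hEc s(d, p) s(e, q)
  refine C.clique_red (N := {d, e, b, c}) (E := {s(d, p), s(e, q)}) hX (by simp)
    (hEW _ _ _ _ hdW hpW heW hqW) hL (by omega) hNb ?_
  have hp : ∀ x, (G.Adj d x ∨ x = p) → G.Adj d x ∨ s(d, x) ∈ ({s(d, p), s(e, q)} : Finset (Sym2 V)) := by
    rintro x (h | rfl)
    · exact Or.inl h
    · right; simp
  have hq : ∀ x, (G.Adj e x ∨ x = q) → G.Adj e x ∨ s(e, x) ∈ ({s(d, p), s(e, q)} : Finset (Sym2 V)) := by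
    rintro x (h | rfl)
    · exact Or.inl h
    · right; simp
  have hsw : ∀ x y, (G.Adj x y ∨ s(x, y) ∈ ({s(d, p), s(e, q)} : Finset (Sym2 V))) →
      (G.Adj y x ∨ s(y, x) ∈ ({s(d, p), s(e, q)} : Finset (Sym2 V))) := by
    rintro x y (h | h)
    · exact Or.inl h.symm
    · right
      rw [show s(y, x) = s(x, y) from Sym2.eq_swap]
      exact h
  have r1 := hp b hp1
  have r2 := hp c hp2
  have r3 := hq b hq1
  have r4 := hq c hq2
  intro x hx y hy hxy
  simp only [Finset.mem_insert (s := {e, b, c}), Finset.mem_insert (s := {b, c}),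
    Finset.mem_insert (s := {c}), Finset.mem_singleton (α := V)] at hx hy
  rcases hx with hx | hx | hx | hx <;> rcases hy with hy | hy | hy | hy <;> rw [hx, hy] <;>
    first
    | exact absurd (hx.trans hy.symm) hxy
    | exact Or.inl hbc
    | exact Or.inl hbc.symm
    | exact Or.inl hde'
    | exact Or.inl hde'.symm
    | assumption
    | (apply hsw; assumption)

/-- The structure at degree four vertices. -/
lemma Ctx.deg_four (C : Ctx G W) (hF : ¬ FC G W) (hW : 19 ≤ W.card)
    (hmin : ∀ v ∈ W, 4 ≤ (nb G v).card) {v : V} (hv : v ∈ W) (hd : (nb G v).card = 4) :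
    ∃ T : Finset V, T.card = 3 ∧ T ⊆ nb G v ∧ (∀ u ∈ T, 5 ≤ (nb G u).card) ∧
      (∀ u ∈ T, ∀ w ∈ T, u ≠ w → G.Adj u w) := by
  have memW : ∀ x ∈ nb G v, x ∈ W := fun x hx => C.supp _ _ (mem_nb.1 hx).symm
  have hnac : ¬ Acyc G (nb G v) := by
    intro hac
    refine hF (FC_nbhd (X := {v}) (N := nb G v) (by simpa using hv) (by simp) ?_ hac
      (by simp; omega))
    intro x hx y _ hxy
    rw [Finset.mem_singleton] at hx
    subst hx; simpa using hxy
  rcases four_of_not_acyc hd hnac with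
    ⟨a, b, c, d, hn, hab', hac', had', hbc', hbd', hcd', hab, hac, hbc⟩ |
    ⟨a, b, c, d, hn, hab', hac', had', hbc', hbd', hcd', hab, hbc, hcd, hda⟩
  · have h5 : ∀ x ∈ nb G v, (nb G x).card ≠ 4 → 5 ≤ (nb G x).card := by
      intro x hx h
      have := hmin x (memW x hx)
      omega
    refine ⟨{a, b, c}, Finset.card_eq_three.2 ⟨a, b, c, hab', hac', hbc', rfl⟩, ?_, ?_, ?_⟩
    · rw [hn]
      intro x hx
      simp only [Finset.mem_insert, Finset.mem_singleton] at hx ⊢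
      tauto
    · intro u hu
      simp only [Finset.mem_insert, Finset.mem_singleton] at hu
      rcases hu with rfl | rfl | rfl
      · exact h5 _ (by rw [hn]; simp) fun h =>
          hF (C.tri_deg hW hv hn hbc' hbd' hcd' hd hab hac hbc h)
      · exact h5 _ (by rw [hn]; simp) fun h =>
          hF (C.tri_deg hW hv (hn.trans (set_bacd _ _ _ _)) hac' had' hcd' hd hab.symm hbc hac h)
      · exact h5 _ (by rw [hn]; simp) fun h =>
          hF (C.tri_deg hW hv (hn.trans (set_cabd _ _ _ _)) hab' had' hbd' hd hac.symm hbc.symm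
            hab h)
    · intro x hx y hy hxy
      simp only [Finset.mem_insert, Finset.mem_singleton] at hx hy
      rcases hx with rfl | rfl | rfl <;> rcases hy with rfl | rfl | rfl <;>
        first
        | exact absurd rfl hxy
        | assumption
        | (apply SimpleGraph.Adj.symm; assumption)
  · exact absurd (C.four_cycle hv hn hac' hd hab hbc hcd hda) hF

lemma Ctx.sum_W (C : Ctx G W) : ∑ v ∈ W, (nb G v).card = 2 * ec G := by
  rw [← sum_deg]
  refine Finset.sum_subset (Finset.subset_univ W) ?_
  intro x _ hx
  rw [Finset.card_eq_zero, Finset.eq_empty_iff_forall_notMem]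
  intro y hy
  exact hx (C.supp _ _ (mem_nb.1 hy))

lemma Ctx.final (C : Ctx G W) : FC G W := by
  by_contra hF
  have hsum := C.sum_W
  have hlt := C.lt
  have hmin0 : ∀ v ∈ W, 4 ≤ (nb G v).card ∨ W.card ≤ (nb G v).card + 1 := by
    intro v hv
    by_contra h
    exact hF (C.deg_three hv (by omega) (by omega))
  by_cases h4 : W.card ≤ 4
  · have h1 : ∀ v ∈ W, W.card - 1 ≤ (nb G v).card := by
      intro v hv
      rcases hmin0 v hv with h | h <;> omega
    have h2 := Finset.card_nsmul_le_sum W _ _ h1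
    rw [hsum, smul_eq_mul] at h2
    generalize W.card = n at *
    interval_cases n <;> omega
  have hmin : ∀ v ∈ W, 4 ≤ (nb G v).card := by
    intro v hv
    rcases hmin0 v hv with h | h <;> omega
  have hW : 19 ≤ W.card := by
    have h2 := Finset.card_nsmul_le_sum W _ _ hmin
    rw [hsum, smul_eq_mul] at h2
    omega
  have hT : ∀ v, ∃ T : Finset V, v ∈ W → (nb G v).card = 4 →
      T.card = 3 ∧ T ⊆ nb G v ∧ (∀ u ∈ T, 5 ≤ (nb G u).card) ∧
      (∀ u ∈ T, ∀ w ∈ T, u ≠ w → G.Adj u w) := by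
    intro v
    by_cases hv : v ∈ W ∧ (nb G v).card = 4
    · obtain ⟨T, hT⟩ := C.deg_four hF hW hmin hv.1 hv.2
      exact ⟨T, fun _ _ => hT⟩
    · exact ⟨∅, fun h1 h2 => absurd ⟨h1, h2⟩ hv⟩
  choose T hT using hT
  set A := W.filter (fun v => (nb G v).card = 4) with hA
  set B := W.filter (fun v => ¬ (nb G v).card = 4) with hB
  have hAm : ∀ v ∈ A, v ∈ W ∧ (nb G v).card = 4 := fun v hv => by simpa [hA] using hv
  have hBm : ∀ v ∈ B, v ∈ W ∧ ¬ (nb G v).card = 4 := fun v hv => by simpa [hB] using hv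
  have hcard : A.card + B.card = W.card := Finset.card_filter_add_card_filter_not _
  have hsplit : ∑ v ∈ A, (nb G v).card + ∑ v ∈ B, (nb G v).card = ∑ v ∈ W, (nb G v).card :=
    Finset.sum_filter_add_sum_filter_not _ _ _
  have hAsum : ∑ v ∈ A, (nb G v).card = A.card * 4 :=
    Finset.sum_const_nat fun v hv => (hAm v hv).2
  have hB5 : B.card * 5 ≤ ∑ v ∈ B, (nb G v).card := by
    rw [← smul_eq_mul]
    refine Finset.card_nsmul_le_sum _ _ _ ?_
    intro v hv
    have h1 := hBm v hv
    have h2 := hmin v h1.1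
    omega
  have hdc := Finset.sum_card_bipartiteAbove_eq_sum_card_bipartiteBelow
    (s := A) (t := B) (fun v u => u ∈ T v)
  have hl : ∑ v ∈ A, (Finset.bipartiteAbove (fun v u => u ∈ T v) B v).card = A.card * 3 := by
    refine Finset.sum_const_nat fun v hv => ?_
    obtain ⟨h1, h2, h3, _⟩ := hT v (hAm v hv).1 (hAm v hv).2
    rw [← h1]
    congr 1
    ext u
    rw [Finset.mem_bipartiteAbove]
    refine ⟨fun h => h.2, fun h => ⟨?_, h⟩⟩
    rw [hB, Finset.mem_filter]
    have := h3 u h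
    exact ⟨C.supp _ _ (mem_nb.1 (h2 h)).symm, by omega⟩
  have hr : ∑ u ∈ B, ((Finset.bipartiteBelow (fun v u => u ∈ T v) A u).card + 2) ≤
      ∑ u ∈ B, (nb G u).card := by
    refine Finset.sum_le_sum fun u hu => ?_
    set D := Finset.bipartiteBelow (fun v u => u ∈ T v) A u with hD
    have hDm : ∀ v ∈ D, v ∈ A ∧ u ∈ T v := fun v hv => by
      rwa [hD, Finset.mem_bipartiteBelow] at hv
    rcases D.eq_empty_or_nonempty with h0 | ⟨v, hvD⟩
    · rw [h0]
      have := hmin u (hBm u hu).1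
      simp; omega
    · obtain ⟨hvA, huv⟩ := hDm v hvD
      obtain ⟨h1, h2, h3, h5⟩ := hT v (hAm v hvA).1 (hAm v hvA).2
      have hc2 : ((T v).erase u).card = 2 := by
        rw [Finset.card_erase_of_mem huv, h1]
      rw [← hc2, ← Finset.card_union_of_disjoint]
      · apply Finset.card_le_card
        intro x hx
        rcases Finset.mem_union.1 hx with hx | hx
        · obtain ⟨hxA, hux⟩ := hDm x hx
          have := (hT x (hAm x hxA).1 (hAm x hxA).2).2.1 hux
          exact mem_nb.2 (mem_nb.1 this).symm
        · obtain ⟨hxu, hxT⟩ := Finset.mem_erase.1 hx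
          exact mem_nb.2 (h5 u huv x hxT hxu.symm)
      · rw [Finset.disjoint_left]
        intro x hx hx'
        have e1 := (hAm x (hDm x hx).1).2
        have e2 := h3 x (Finset.mem_of_mem_erase hx')
        omega
  rw [Finset.sum_add_distrib, ← hdc, hl, Finset.sum_const, smul_eq_mul] at hr
  omega

lemma main_aux (n : ℕ) : ∀ (G : SimpleGraph V) (W : Finset V), W.card = n →
    (∀ x y, G.Adj x y → x ∈ W) → 5 * ec G + 18 < 11 * W.card → FC G W := by
  induction n using Nat.strong_induction_on with
  | _ n ih =>
    intro G W hW hs hlt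
    refine Ctx.final ⟨?_, hs, hlt⟩
    intro G' W' hc hs' hlt'
    exact ih W'.card (hW ▸ hc) G' W' rfl hs' hlt'

end FCut

/-- If a graph `G` of order `n` has fewer than `(11/5) n - 18/5` edges,
then `G` has a forest cut. -/
theorem sparse_graph_has_forest_cut
    {V : Type*} [Fintype V] (G : SimpleGraph V) [Fintype G.edgeSet]
    (h : (G.edgeFinset.card : ℝ) < 11 / 5 * Fintype.card V - 18 / 5) :
    ∃ S : Set V, IsForestCut G S := by
  classical
  have h1 : FCut.ec G = G.edgeFinset.card := by
    rw [FCut.ec, ← G.coe_edgeFinset, Set.ncard_coe_finset]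
  have hlt : 5 * FCut.ec G + 18 < 11 * (Finset.univ : Finset V).card := by
    rw [h1, Finset.card_univ]
    have : (5 * (G.edgeFinset.card : ℝ) + 18) < 11 * (Fintype.card V : ℝ) := by linarith
    exact_mod_cast this
  obtain ⟨A, B, -, -, ⟨a, ha⟩, ⟨b, hb⟩, hAB, hadj, hac⟩ :=
    FCut.main_aux _ G Finset.univ rfl (fun x _ _ => Finset.mem_univ x) hlt
  refine ⟨((Finset.univ \ (A ∪ B) : Finset V) : Set V), ⟨⟨a, by simp [ha]⟩, ⟨b, by simp [hb]⟩, ?_⟩, ?_⟩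
  · rintro ⟨p⟩
    have key : ∀ (x y : ↥(((Finset.univ \ (A ∪ B) : Finset V) : Set V)ᶜ))
        (p : (G.induce (((Finset.univ \ (A ∪ B) : Finset V) : Set V)ᶜ)).Walk x y),
        (x : V) ∈ A → (y : V) ∈ A := by
      intro x y p
      induction p with
      | nil => exact id
      | @cons x z y hxz _ ih =>
        intro hx
        apply ih
        have hz := z.2
        simp only [Finset.coe_sdiff, Finset.coe_univ, Set.mem_compl_iff, Set.mem_sdiff,
          Set.mem_univ, true_and, not_not, Finset.mem_coe, Finset.mem_union] at hz
        rcases hz with hz | hz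
        · exact hz
        · exact absurd hxz (hadj _ hx _ hz)
    exact Finset.disjoint_left.1 hAB (key _ _ p ha) hb
  · refine SimpleGraph.IsAcyclic.comap (G' := FCut.restr G (Finset.univ \ (A ∪ B)))
      ⟨Subtype.val, ?_⟩ Subtype.val_injective hac
    intro x y hxy
    exact ⟨hxy, Finset.mem_coe.1 x.2, Finset.mem_coe.1 y.2⟩
end

section
/- Let H be a graph and let G arise from H by adding one new vertex that is adjacent to all vertices of H. Then G has a forest cut if and only if H has an independent cut. -/
/-- If `G` arises from `H` by adding one new vertex adjacent to all vertices of `H`,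
then `G` has a forest cut if and only if `H` has an independent cut. -/
theorem forest_cut_iff_independent_cut_of_cone
    {W : Type*} (H : SimpleGraph W) (G : SimpleGraph (Option W))
    (hGH : ∀ a b : W, G.Adj (some a) (some b) ↔ H.Adj a b)
    (hGu : ∀ a : W, G.Adj none (some a)) :
    (∃ S : Set (Option W), IsForestCut G S) ↔ (∃ S : Set W, IsIndependentCut H S) := by
  constructor
  · rintro ⟨S, ⟨a, b, hab⟩, hac⟩
    have hn : none ∈ S := by
      by_contra hn
      have key : ∀ x : ↥(Sᶜ), (G.induce Sᶜ).Reachable ⟨none, hn⟩ x := by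
        rintro ⟨x, hx⟩
        cases x with
        | none => exact SimpleGraph.Reachable.refl _
        | some x =>
          apply SimpleGraph.Adj.reachable
          simpa using hGu x
      exact hab ((key a).symm.trans (key b))
    refine ⟨some ⁻¹' S, ?_, ?_⟩
    · obtain ⟨a, ha⟩ := a
      obtain ⟨b, hb⟩ := b
      cases a with
      | none => exact absurd hn ha
      | some a =>
      cases b with
      | none => exact absurd hn hb
      | some b =>
      refine ⟨⟨a, ha⟩, ⟨b, hb⟩, fun h => hab ?_⟩
      let f : H.induce (some ⁻¹' S)ᶜ →g G.induce Sᶜ :=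
        { toFun := fun x => ⟨some x.1, x.2⟩
          map_rel' := fun {x y} h => by
            simpa [hGH] using h }
      exact h.map f
    · intro a ha b hb hadj
      let n : S := ⟨none, hn⟩
      let a' : S := ⟨some a, ha⟩
      let b' : S := ⟨some b, hb⟩
      have h1 : (G.induce S).Adj n a' := hGu a
      have h2 : (G.induce S).Adj a' b' := (hGH a b).2 hadj
      have h3 : (G.induce S).Adj b' n := (hGu b).symm
      have hne : a ≠ b := hadj.ne
      refine hac (.cons h1 (.cons h2 (.cons h3 .nil))) ?_
      simp [SimpleGraph.Walk.cons_isCycle_iff, n, a', b', hne]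
  · rintro ⟨S, ⟨a, b, hab⟩, hi⟩
    refine ⟨insert none (some '' S), ⟨⟨some a.1, ?_⟩, ⟨some b.1, ?_⟩, fun h => hab ?_⟩, ?_⟩
    · have := a.2; simp; exact this
    · have := b.2; simp; exact this
    · let f : G.induce (insert none (some '' S))ᶜ →g H.induce Sᶜ :=
        { toFun := fun x => ⟨x.1.getD a.1, by
            obtain ⟨x, hx⟩ := x
            cases x with
            | none => simp at hx
            | some x => simpa using hx⟩
          map_rel' := fun {x y} h => by
            obtain ⟨x, hx⟩ := x
            obtain ⟨y, hy⟩ := y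
            cases x with
            | none => simp at hx
            | some x =>
            cases y with
            | none => simp at hy
            | some y => simpa [hGH] using h }
      exact h.map f
    · set T : Set (Option W) := insert none (some '' S) with hT
      -- every leaf has the centre as its only neighbour
      have leaf : ∀ (x : W) (hx : some x ∈ T) (y : T), (G.induce T).Adj ⟨some x, hx⟩ y →
          y.1 = none := by
        rintro x hx ⟨y, hy⟩ h
        cases y with
        | none => rfl
        | some y =>
          exact absurd ((hGH x y).1 h) (hi x (by simpa [hT] using hx) y (by simpa [hT] using hy))
      have br : ∀ (x : W) (hx : some x ∈ T) (y : T), (G.induce T).Adj ⟨some x, hx⟩ y →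
          (G.induce T).IsBridge s(⟨some x, hx⟩, y) := by
        intro x hx y h
        rw [SimpleGraph.isBridge_iff]
        rintro ⟨p⟩
        cases p with
        | nil => exact h.ne rfl
        | @cons _ z _ h' q =>
          have e : z = y := Subtype.ext (by
            rw [leaf x hx y h, leaf x hx z (SimpleGraph.deleteEdges_le _ h')])
          subst e
          simp at h'
      rw [SimpleGraph.isAcyclic_iff_forall_adj_isBridge]
      rintro ⟨v, hv⟩ ⟨w, hw⟩ h
      cases v with
      | some v => exact br v hv _ h
      | none =>
        cases w with
        | none => exact absurd rfl h.ne
        | some w =>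
          rw [Sym2.eq_swap]
          exact br w hw _ h.symm
end

section
/- If G is a 4-connected graph of order n greater than 8 that has no forest cut, u is a vertex of G of degree 4, and the neighborhood N_G(u) of u contains a triangle (three pairwise adjacent vertices), then the sum of the degrees in G of the four neighbors of u is at least 19. -/
/-- A graph is `k`-connected if it has more than `k` vertices and deleting any set of
fewer than `k` vertices leaves a connected graph. -/
def KConnected {V : Type*} [Fintype V] (k : ℕ) (G : SimpleGraph V) : Prop :=
  k < Fintype.card V ∧ ∀ S : Finset V, S.card < k → (G.induce (↑S : Set V)ᶜ).Connected

/-- Every set `S` separating a small set `T` (from the rest) has at least four elements and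
contains a cycle. -/
def FCGood {V : Type*} (G : SimpleGraph V) : Prop :=
  ∀ (v : V) (T S : Finset V), v ∈ T → v ∉ S → (∀ x ∈ T, ∀ y, G.Adj x y → y ∈ T ∨ y ∈ S) →
    T.card + S.card ≤ 8 → 4 ≤ S.card ∧ ¬ (G.induce (S : Set V)).IsAcyclic

theorem fc_good {V : Type*} [Fintype V] [DecidableEq V] (G : SimpleGraph V)
    (hconn : KConnected 4 G) (hn : 8 < Fintype.card V)
    (hnf : ¬ ∃ S : Set V, IsForestCut G S) : FCGood G := by
  intro v T S hvT hvS hcl hcard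
  obtain ⟨w, hw⟩ : ∃ w, w ∉ T ∪ S := by
    by_contra hcon
    push Not at hcon
    have h1 : T ∪ S = Finset.univ := Finset.eq_univ_iff_forall.2 hcon
    have h2 := Finset.card_union_le T S
    rw [h1, Finset.card_univ] at h2
    omega
  have hwT : w ∉ T := fun h => hw (Finset.mem_union_left _ h)
  have hwS : w ∉ S := fun h => hw (Finset.mem_union_right _ h)
  have hnr : ¬ (G.induce (S : Set V)ᶜ).Reachable ⟨v, by simpa using hvS⟩ ⟨w, by simpa using hwS⟩ := by
    rintro ⟨p⟩
    have key : ∀ (x y : ↥((S : Set V)ᶜ)) (p : (G.induce (S : Set V)ᶜ).Walk x y),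
        (x : V) ∈ T → (y : V) ∈ T := by
      intro x y p
      induction p with
      | nil => exact id
      | @cons x y z h p ih =>
        intro hx
        apply ih
        rcases hcl x hx y h with h1 | h1
        · exact h1
        · exact absurd (Finset.mem_coe.2 h1) y.2
    exact hwT (key _ _ p hvT)
  constructor
  · by_contra hlt
    exact hnr ((hconn.2 S (by omega)).preconnected _ _)
  · intro hac
    exact hnf ⟨S, ⟨_, _, hnr⟩, hac⟩

theorem fc_tri {V : Type*} [DecidableEq V] (G : SimpleGraph V) (p q r s : V)
    (hac : ¬ (G.induce (({p, q, r, s} : Finset V) : Set V)).IsAcyclic)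
    (hsq : ¬ G.Adj s q) (hsr : ¬ G.Adj s r) : G.Adj p q ∧ G.Adj q r ∧ G.Adj p r := by
  unfold SimpleGraph.IsAcyclic at hac
  push Not at hac
  obtain ⟨x, c, hc⟩ := hac
  have hC : ∀ y ∈ c.support, ∃ z ∈ c.support, ∃ w ∈ c.support, z ≠ w ∧
      G.Adj (y : V) z ∧ G.Adj (y : V) w := by
    intro y hy
    have h2 := hc.ncard_neighborSet_toSubgraph_eq_two hy
    obtain ⟨z, w, hzw, he⟩ := Set.ncard_eq_two.1 h2
    have hz : c.toSubgraph.Adj y z := by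
      have : z ∈ c.toSubgraph.neighborSet y := by rw [he]; simp
      exact this
    have hw : c.toSubgraph.Adj y w := by
      have : w ∈ c.toSubgraph.neighborSet y := by rw [he]; simp
      exact this
    refine ⟨z, ?_, w, ?_, hzw, hz.adj_sub, hw.adj_sub⟩
    · exact (c.mem_verts_toSubgraph).1 hz.snd_mem
    · exact (c.mem_verts_toSubgraph).1 hw.snd_mem
  have hC' : ∀ y : V, (∃ h, (⟨y, h⟩ : ↥(({p, q, r, s} : Finset V) : Set V)) ∈ c.support) →
      (y = p ∨ y = q ∨ y = r ∨ y = s) ∧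
      ∃ z w : V, (∃ h, (⟨z, h⟩ : ↥(({p, q, r, s} : Finset V) : Set V)) ∈ c.support) ∧
      (∃ h, (⟨w, h⟩ : ↥(({p, q, r, s} : Finset V) : Set V)) ∈ c.support) ∧
      z ≠ w ∧ G.Adj y z ∧ G.Adj y w := by
    rintro y ⟨h, hy⟩
    refine ⟨by simpa using h, ?_⟩
    obtain ⟨z, hz, w, hw, hne, h1, h2⟩ := hC _ hy
    exact ⟨z, w, ⟨z.2, hz⟩, ⟨w.2, hw⟩, fun h => hne (Subtype.ext h), h1, h2⟩
  have hx : ∃ h, (⟨(x : V), h⟩ : ↥(({p, q, r, s} : Finset V) : Set V)) ∈ c.support :=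
    ⟨x.2, c.start_mem_support⟩
  generalize (x : V) = x0 at hx
  generalize hP : (fun y : V => ∃ h, (⟨y, h⟩ : ↥(({p, q, r, s} : Finset V) : Set V)) ∈ c.support) = P at *
  have hP' : ∀ y, (∃ h, (⟨y, h⟩ : ↥(({p, q, r, s} : Finset V) : Set V)) ∈ c.support) ↔ P y := by
    intro y; rw [← hP]
  simp only [hP'] at hC' hx
  clear hP hP' hC hc
  have irr : ∀ y, ¬ G.Adj y y := fun y => G.irrefl
  have sym : ∀ y z, G.Adj y z → G.Adj z y := fun y z h => h.symm
  have hs : ¬ P s := by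
    intro h
    obtain ⟨-, z, w, hz, hw, hne, h1, h2⟩ := hC' s h
    have hz' := (hC' z hz).1
    have hw' := (hC' w hw).1
    grind
  obtain ⟨hx0, z, w, hz, hw, hne, h1, h2⟩ := hC' x0 hx
  obtain ⟨hz', z1, z2, hz1, hz2, hne', h1', h2'⟩ := hC' z hz
  have hw' := (hC' w hw).1
  have hz1' := (hC' z1 hz1).1
  have hz2' := (hC' z2 hz2).1
  have n1 : x0 ≠ z := h1.ne
  have n2 : x0 ≠ w := h2.ne
  have n3 : z ≠ z1 := h1'.ne
  have n4 : z ≠ z2 := h2'.ne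
  have hzw : G.Adj z w := by grind
  have := h1.symm
  have := h2.symm
  have := hzw.symm
  grind

structure FCCfg {V : Type*} (G : SimpleGraph V) (u a b c d : V) : Prop where
  nu : ∀ x, G.Adj u x ↔ x = a ∨ x = b ∨ x = c ∨ x = d
  nab : a ≠ b
  nac : a ≠ c
  nad : a ≠ d
  nbc : b ≠ c
  nbd : b ≠ d
  ncd : c ≠ d
  ab : G.Adj a b
  ac : G.Adj a c
  bc : G.Adj b c

theorem FCCfg.s1 {V : Type*} {G : SimpleGraph V} {u a b c d : V} (h : FCCfg G u a b c d) :
    FCCfg G u b a c d :=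
  ⟨fun x => by rw [h.nu]; tauto, h.nab.symm, h.nbc, h.nbd, h.nac, h.nad, h.ncd, h.ab.symm, h.bc, h.ac⟩

theorem FCCfg.s2 {V : Type*} {G : SimpleGraph V} {u a b c d : V} (h : FCCfg G u a b c d) :
    FCCfg G u a c b d :=
  ⟨fun x => by rw [h.nu]; tauto, h.nac, h.nab, h.nad, h.nbc.symm, h.ncd, h.nbd, h.ac, h.ab, h.bc.symm⟩

/-- The neighbours of `x` outside the closed neighbourhood of `u`. -/
def fcO {V : Type*} [Fintype V] [DecidableEq V] (G : SimpleGraph V) [DecidableRel G.Adj]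
    (u x : V) : Finset V :=
  Finset.univ.filter fun y => G.Adj x y ∧ y ≠ u ∧ ¬ G.Adj u y

section
variable {V : Type*} [Fintype V] [DecidableEq V] {G : SimpleGraph V} [DecidableRel G.Adj]

theorem fc_mem {u x y : V} : y ∈ fcO G u x ↔ G.Adj x y ∧ y ≠ u ∧ ¬ G.Adj u y := by
  simp [fcO]

theorem fc_deg {u a b c d : V} (h : FCCfg G u a b c d) (x : V) :
    G.degree x = (fcO G u x).card + ((if G.Adj x u then 1 else 0) + ((if G.Adj x a then 1 else 0)
      + ((if G.Adj x b then 1 else 0) + ((if G.Adj x c then 1 else 0)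
      + (if G.Adj x d then 1 else 0))))) := by
  have hua : u ≠ a := ((h.nu a).2 (by simp)).ne
  have hub : u ≠ b := ((h.nu b).2 (by simp)).ne
  have huc : u ≠ c := ((h.nu c).2 (by simp)).ne
  have hud : u ≠ d := ((h.nu d).2 (by simp)).ne
  have e : G.neighborFinset x = fcO G u x ∪ ({u, a, b, c, d} : Finset V).filter (G.Adj x) := by
    ext y
    simp only [SimpleGraph.mem_neighborFinset, Finset.mem_union, fc_mem, Finset.mem_filter,
      Finset.mem_insert, Finset.mem_singleton, h.nu]
    tauto
  have hd : Disjoint (fcO G u x) (({u, a, b, c, d} : Finset V).filter (G.Adj x)) := by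
    rw [Finset.disjoint_left]
    intro y
    simp only [fc_mem, Finset.mem_filter,
      Finset.mem_insert, Finset.mem_singleton, h.nu]
    tauto
  rw [← SimpleGraph.card_neighborFinset_eq_degree, e, Finset.card_union_of_disjoint hd,
    Finset.card_filter]
  congr 1
  rw [Finset.sum_insert, Finset.sum_insert, Finset.sum_insert, Finset.sum_insert,
    Finset.sum_singleton]
  all_goals simp [hua, hub, huc, hud, h.nab, h.nac, h.nad, h.nbc, h.nbd, h.ncd]

theorem fc_min (hG : FCGood G) (x : V) : 4 ≤ G.degree x := by
  by_contra hlt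
  have := (hG x {x} (G.neighborFinset x) (by simp) (by simp)
    (fun z hz y hy => Or.inr (by simp at hz; subst hz; simpa using hy)) (by simp; omega)).1
  simp at this
  omega

theorem FCGood.three (hG : FCGood G) (u : V) (T : Finset V) (p q r : V) (hT : T.card ≤ 5) (hu : u ∈ T)
    (hp : u ≠ p) (hq : u ≠ q) (hr : u ≠ r)
    (hcl : ∀ x ∈ T, ∀ y, G.Adj x y → y ∈ T ∨ y = p ∨ y = q ∨ y = r) : False := by
  have h3 : ({p, q, r} : Finset V).card ≤ 3 := Finset.card_le_three
  have := (hG u T {p, q, r} hu (by simp [hp, hq, hr]) (by simpa using hcl) (by omega)).1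
  omega

theorem FCGood.four (hG : FCGood G) (u : V) (T : Finset V) (p q r s : V) (hT : T.card ≤ 4) (hu : u ∈ T)
    (hp : u ≠ p) (hq : u ≠ q) (hr : u ≠ r) (hs : u ≠ s)
    (hcl : ∀ x ∈ T, ∀ y, G.Adj x y → y ∈ T ∨ y = p ∨ y = q ∨ y = r ∨ y = s)
    (hsq : ¬ G.Adj s q) (hsr : ¬ G.Adj s r) : G.Adj p q ∧ G.Adj q r ∧ G.Adj p r := by
  have h3 : ({p, q, r, s} : Finset V).card ≤ 4 := Finset.card_le_four
  have := (hG u T {p, q, r, s} hu (by simp [hp, hq, hr, hs]) (by simpa using hcl) (by omega)).2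
  exact fc_tri G p q r s this hsq hsr

/-- Neighbours of `x` are in the closed neighbourhood of `u` or in `fcO G u x`. -/
theorem FCCfg.nb {u a b c d : V} (h : FCCfg G u a b c d) (x y : V) (hxy : G.Adj x y) :
    y = u ∨ y = a ∨ y = b ∨ y = c ∨ y = d ∨ y ∈ fcO G u x := by
  rw [fc_mem, h.nu]; tauto

theorem FCCfg.nbu {u a b c d : V} (h : FCCfg G u a b c d) (y : V) (hxy : G.Adj u y) :
    y = a ∨ y = b ∨ y = c ∨ y = d := (h.nu y).1 hxy

theorem FCCfg.ne {u a b c d : V} (h : FCCfg G u a b c d) : u ≠ a ∧ u ≠ b ∧ u ≠ c ∧ u ≠ d :=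
  ⟨((h.nu a).2 (by simp)).ne, ((h.nu b).2 (by simp)).ne, ((h.nu c).2 (by simp)).ne,
    ((h.nu d).2 (by simp)).ne⟩

theorem fc_ne (u x y : V) (h : y ∈ fcO G u x) : u ≠ y := (fc_mem.1 h).2.1.symm

theorem fc_pos (hG : FCGood G) {u a b c d : V} (h : FCCfg G u a b c d) :
    1 ≤ (fcO G u a).card := by
  by_contra h0
  have h0 : fcO G u a = ∅ := Finset.card_eq_zero.1 (by omega)
  obtain ⟨_, h2, h3, h4⟩ := h.ne
  refine hG.three u {u, a} b c d (le_trans Finset.card_le_two (by norm_num)) (by simp) h2 h3 h4 ?_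
  have n1 := h.nb a
  have n0 := h.nbu
  simp only [h0] at n1
  grind

theorem fc_posd (hG : FCGood G) {u a b c d : V} (h : FCCfg G u a b c d) :
    1 ≤ (fcO G u d).card := by
  by_contra h0
  have h0 : fcO G u d = ∅ := Finset.card_eq_zero.1 (by omega)
  obtain ⟨h1, h2, h3, _⟩ := h.ne
  refine hG.three u {u, d} a b c (le_trans Finset.card_le_two (by norm_num)) (by simp) h1 h2 h3 ?_
  have n1 := h.nb d
  have n0 := h.nbu
  simp only [h0] at n1
  grind

theorem fc_L1 (hG : FCGood G) {u a b c d : V} (h : FCCfg G u a b c d) (hdb : ¬ G.Adj d b)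
    (hdc : ¬ G.Adj d c) (ha : (fcO G u a).card = 1) :
    ∃ a', fcO G u a = {a'} ∧ G.Adj b a' ∧ G.Adj c a' := by
  obtain ⟨a', ha'⟩ := Finset.card_eq_one.1 ha
  refine ⟨a', ha', ?_⟩
  have hne := fc_ne (G := G) u a a' (by simp [ha'])
  obtain ⟨_, h2, h3, h4⟩ := h.ne
  have := hG.four u {u, a} a' b c d (le_trans Finset.card_le_two (by norm_num)) (by simp)
    hne h2 h3 h4 (by
      have n1 := h.nb a
      have n0 := h.nbu
      simp only [ha'] at n1
      grind) hdb hdc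
  exact ⟨this.1.symm, this.2.2.symm⟩

theorem fc_L2 (hG : FCGood G) {u a b c d : V} (h : FCCfg G u a b c d) (hdb : ¬ G.Adj d b)
    (hdc : ¬ G.Adj d c) (ha : (fcO G u a).card = 1) (hb : (fcO G u b).card = 1) : False := by
  obtain ⟨a', ha', hba, hca⟩ := fc_L1 hG h hdb hdc ha
  have hm : a' ∈ fcO G u a := by simp [ha']
  have hne := fc_ne u a a' hm
  have hmb : a' ∈ fcO G u b := fc_mem.2 ⟨hba, (fc_mem.1 hm).2⟩
  obtain ⟨b', hb'⟩ := Finset.card_eq_one.1 hb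
  have : b' = a' := by rw [hb'] at hmb; exact (Finset.mem_singleton.1 hmb).symm
  subst this
  obtain ⟨_, h2, h3, h4⟩ := h.ne
  refine hG.three u {u, a, b} b' c d (le_trans Finset.card_le_three (by norm_num)) (by simp)
    hne h3 h4 ?_
  have n1 := h.nb a
  have n2 := h.nb b
  have n0 := h.nbu
  simp only [ha'] at n1
  simp only [hb'] at n2
  grind

theorem fc_pair {u x p : V} (hc : (fcO G u x).card = 2) (hp : p ∈ fcO G u x) :
    ∃ q, q ≠ p ∧ fcO G u x = {p, q} := by
  obtain ⟨q, r, hqr, e⟩ := Finset.card_eq_two.1 hc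
  rw [e] at hp
  simp only [Finset.mem_insert, Finset.mem_singleton] at hp
  rcases hp with rfl | rfl
  · exact ⟨r, hqr.symm, e⟩
  · exact ⟨q, hqr, by rw [e, Finset.pair_comm]⟩

/-- Case `t = 0`: first neighbour sets of size 1, 2, 2. -/
theorem fc_T0half (hG : FCGood G) {u a b c d a' b' c' : V} (h : FCCfg G u a b c d)
    (hda : ¬ G.Adj d a) (hdb : ¬ G.Adj d b) (hdc : ¬ G.Adj d c)
    (ha : fcO G u a = {a'}) (hb : fcO G u b = {a', b'}) (hc : fcO G u c = {a', c'})
    (hb1 : b' ≠ a') (hbc : b' ≠ c') : G.Adj d a' ∧ G.Adj d b' := by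
  have hma : a' ∈ fcO G u a := by simp [ha]
  have hmb : b' ∈ fcO G u b := by simp [hb]
  obtain ⟨_, h2, h3, h4⟩ := h.ne
  have hcb : ¬ G.Adj c b' := by
    intro hh
    have : b' ∈ fcO G u c := fc_mem.2 ⟨hh, (fc_mem.1 hmb).2⟩
    rw [hc] at this
    simp [hb1, hbc] at this
  have := hG.four u {u, a, b} a' d b' c (le_trans Finset.card_le_three (by norm_num)) (by simp)
    (fc_ne _ _ _ hma) h4 (fc_ne _ _ _ hmb) h3 (by
      have n1 := h.nb a
      have n2 := h.nb b
      have n0 := h.nbu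
      simp only [ha] at n1
      simp only [hb] at n2
      grind) (fun hh => hdc hh.symm) hcb
  exact ⟨this.1.symm, this.2.1⟩

theorem fc_T0 (hG : FCGood G) {u a b c d : V} (h : FCCfg G u a b c d)
    (hda : ¬ G.Adj d a) (hdb : ¬ G.Adj d b) (hdc : ¬ G.Adj d c)
    (ha : (fcO G u a).card = 1) (hb : (fcO G u b).card = 2) (hc : (fcO G u c).card = 2)
    (hd : (fcO G u d).card = 3) : False := by
  obtain ⟨a', ha', hba, hca⟩ := fc_L1 hG h hdb hdc ha
  have hma : a' ∈ fcO G u a := by simp [ha']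
  have hmb : a' ∈ fcO G u b := fc_mem.2 ⟨hba, (fc_mem.1 hma).2⟩
  have hmc : a' ∈ fcO G u c := fc_mem.2 ⟨hca, (fc_mem.1 hma).2⟩
  obtain ⟨b', hb1, hb'⟩ := fc_pair hb hmb
  obtain ⟨c', hc1, hc'⟩ := fc_pair hc hmc
  have hmb' : b' ∈ fcO G u b := by simp [hb']
  have hmc' : c' ∈ fcO G u c := by simp [hc']
  obtain ⟨h1, h2, h3, h4⟩ := h.ne
  have n1 := h.nb a
  have n2 := h.nb b
  have n3 := h.nb c
  have n4 := h.nb d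
  have n0 := h.nbu
  simp only [ha'] at n1
  simp only [hb'] at n2
  simp only [hc'] at n3
  by_cases hbc : b' = c'
  · refine hG.three u {u, a, b, c} a' b' d (le_trans Finset.card_le_four (by norm_num)) (by simp)
      (fc_ne _ _ _ hma) (fc_ne _ _ _ hmb') h4 ?_
    grind
  · obtain ⟨e1, e2⟩ := fc_T0half hG h hda hdb hdc ha' hb' hc' hb1 hbc
    obtain ⟨-, e3⟩ := fc_T0half hG h.s2 hda hdc hdb ha' hc' hb' hc1 (Ne.symm hbc)
    have hsub : ({a', b', c'} : Finset V) ⊆ fcO G u d := by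
      intro y hy
      simp only [Finset.mem_insert, Finset.mem_singleton] at hy
      rcases hy with rfl | rfl | rfl
      · exact fc_mem.2 ⟨e1, (fc_mem.1 hma).2⟩
      · exact fc_mem.2 ⟨e2, (fc_mem.1 hmb').2⟩
      · exact fc_mem.2 ⟨e3, (fc_mem.1 hmc').2⟩
    have hcard : ({a', b', c'} : Finset V).card = 3 :=
      Finset.card_eq_three.2 ⟨a', b', c', hb1.symm, hc1.symm, hbc, rfl⟩
    have hd' := Finset.eq_of_subset_of_card_le hsub (by omega)
    simp only [← hd'] at n4
    refine hG.three u {u, a, b, c, d} a' b' c' Finset.card_le_five (by simp)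
      (fc_ne _ _ _ hma) (fc_ne _ _ _ hmb') (fc_ne _ _ _ hmc') ?_
    grind

theorem fc_T1half (hG : FCGood G) {u a b c d b' c' : V} (h : FCCfg G u a b c d)
    (hdc : ¬ G.Adj d c)
    (hb : fcO G u b = {b'}) (hc : fcO G u c = {c'}) (hdb : ¬ G.Adj d b)
    (hbc : b' ≠ c') : G.Adj a b' ∧ G.Adj d b' := by
  have hmb : b' ∈ fcO G u b := by simp [hb]
  obtain ⟨h1, h2, h3, h4⟩ := h.ne
  have hcb : ¬ G.Adj c b' := by
    intro hh
    have : b' ∈ fcO G u c := fc_mem.2 ⟨hh, (fc_mem.1 hmb).2⟩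
    rw [hc] at this
    simp [hbc] at this
  have := hG.four u {u, b} a d b' c (le_trans Finset.card_le_two (by norm_num)) (by simp)
    h1 h4 (fc_ne _ _ _ hmb) h3 (by
      have n2 := h.nb b
      have n0 := h.nbu
      simp only [hb] at n2
      grind) (fun hh => hdc hh.symm) hcb
  exact ⟨this.2.2, this.2.1⟩

theorem fc_T1 (hG : FCGood G) {u a b c d : V} (h : FCCfg G u a b c d)
    (hdb : ¬ G.Adj d b) (hdc : ¬ G.Adj d c)
    (ha : (fcO G u a).card = 2) (hb : (fcO G u b).card = 1) (hc : (fcO G u c).card = 1)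
    (hd : (fcO G u d).card = 2) : False := by
  obtain ⟨b', hb'⟩ := Finset.card_eq_one.1 hb
  obtain ⟨c', hc'⟩ := Finset.card_eq_one.1 hc
  have hmb : b' ∈ fcO G u b := by simp [hb']
  have hmc : c' ∈ fcO G u c := by simp [hc']
  obtain ⟨h1, h2, h3, h4⟩ := h.ne
  have n1 := h.nb a
  have n2 := h.nb b
  have n3 := h.nb c
  have n4 := h.nb d
  have n0 := h.nbu
  simp only [hb'] at n2
  simp only [hc'] at n3
  by_cases hbc : b' = c'
  · refine hG.three u {u, b, c} a b' d (le_trans Finset.card_le_three (by norm_num)) (by simp)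
      h1 (fc_ne _ _ _ hmb) h4 ?_
    grind
  · obtain ⟨e1, e2⟩ := fc_T1half hG h hdc hb' hc' hdb hbc
    obtain ⟨e3, e4⟩ := fc_T1half hG h.s2 hdb hc' hb' hdc (Ne.symm hbc)
    have hcard : ({b', c'} : Finset V).card = 2 := Finset.card_pair hbc
    have key : ∀ x, G.Adj x b' → G.Adj x c' → (fcO G u x).card = 2 → fcO G u x = {b', c'} := by
      intro x f1 f2 f3
      symm
      apply Finset.eq_of_subset_of_card_le _ (by omega)
      intro y hy
      simp only [Finset.mem_insert, Finset.mem_singleton] at hy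
      rcases hy with rfl | rfl
      · exact fc_mem.2 ⟨f1, (fc_mem.1 hmb).2⟩
      · exact fc_mem.2 ⟨f2, (fc_mem.1 hmc).2⟩
    simp only [key a e1 e3 ha] at n1
    simp only [key d e2 e4 hd] at n4
    refine hG.three u {u, a, b, c, d} b' c' c' Finset.card_le_five (by simp)
      (fc_ne _ _ _ hmb) (fc_ne _ _ _ hmc) (fc_ne _ _ _ hmc) ?_
    grind

theorem fc_T2 (hG : FCGood G) {u a b c d : V} (h : FCCfg G u a b c d)
    (hdc : ¬ G.Adj d c)
    (ha : (fcO G u a).card = 1) (hb : (fcO G u b).card = 1) (hc : (fcO G u c).card = 1)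
    (hd : (fcO G u d).card = 1) : False := by
  obtain ⟨a', ha'⟩ := Finset.card_eq_one.1 ha
  obtain ⟨b', hb'⟩ := Finset.card_eq_one.1 hb
  obtain ⟨c', hc'⟩ := Finset.card_eq_one.1 hc
  obtain ⟨d', hd'⟩ := Finset.card_eq_one.1 hd
  have hma : a' ∈ fcO G u a := by simp [ha']
  have hmb : b' ∈ fcO G u b := by simp [hb']
  have hmc : c' ∈ fcO G u c := by simp [hc']
  have hmd : d' ∈ fcO G u d := by simp [hd']
  obtain ⟨h1, h2, h3, h4⟩ := h.ne
  have n1 := h.nb a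
  have n2 := h.nb b
  have n3 := h.nb c
  have n4 := h.nb d
  have n0 := h.nbu
  simp only [ha'] at n1
  simp only [hb'] at n2
  simp only [hc'] at n3
  simp only [hd'] at n4
  by_cases hac : a' = c'
  · refine hG.three u {u, a, b, c, d} a' b' d' Finset.card_le_five (by simp)
      (fc_ne _ _ _ hma) (fc_ne _ _ _ hmb) (fc_ne _ _ _ hmd) ?_
    grind
  by_cases had : a' = d'
  · refine hG.three u {u, a, b, c, d} a' b' c' Finset.card_le_five (by simp)
      (fc_ne _ _ _ hma) (fc_ne _ _ _ hmb) (fc_ne _ _ _ hmc) ?_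
    grind
  have k1 : ¬ G.Adj c a' := by
    intro hh
    have : a' ∈ fcO G u c := fc_mem.2 ⟨hh, (fc_mem.1 hma).2⟩
    rw [hc'] at this
    simp [hac] at this
  have k2 : ¬ G.Adj d a' := by
    intro hh
    have : a' ∈ fcO G u d := fc_mem.2 ⟨hh, (fc_mem.1 hma).2⟩
    rw [hd'] at this
    simp [had] at this
  have := hG.four u {u, a} b c d a' (le_trans Finset.card_le_two (by norm_num)) (by simp)
    h2 h3 h4 (fc_ne _ _ _ hma) (by grind) (fun hh => k1 hh.symm) (fun hh => k2 hh.symm)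
  exact hdc this.2.1.symm

theorem fc_main (hG : FCGood G) {u a b c d : V} (h : FCCfg G u a b c d) :
    19 ≤ G.degree a + G.degree b + G.degree c + G.degree d := by
  by_contra hlt
  have ua := (h.nu a).2 (by simp)
  have ub := (h.nu b).2 (by simp)
  have uc := (h.nu c).2 (by simp)
  have ud := (h.nu d).2 (by simp)
  have da := fc_deg h a
  have db := fc_deg h b
  have dc := fc_deg h c
  have dd := fc_deg h d
  have pa := fc_pos hG h
  have pb := fc_pos hG h.s1
  have pc := fc_pos hG h.s2.s1
  have pd := fc_posd hG h
  have md := fc_min hG d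
  simp only [ua.symm, ub.symm, uc.symm, ud.symm, h.ab, h.ac, h.bc, h.ab.symm, h.ac.symm, h.bc.symm,
    SimpleGraph.irrefl, if_true, if_false, G.adj_comm a d, G.adj_comm b d, G.adj_comm c d]
    at da db dc dd
  have A12 := fun x y => fc_L2 hG h x y
  have A13 := fun x y => fc_L2 hG h.s2 x y
  have A21 := fun x y => fc_L2 hG h.s1 x y
  have A23 := fun x y => fc_L2 hG h.s1.s2 x y
  have A31 := fun x y => fc_L2 hG h.s2.s1 x y
  have A32 := fun x y => fc_L2 hG h.s2.s1.s2 x y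
  by_cases ha : G.Adj d a <;> by_cases hb : G.Adj d b <;> by_cases hc : G.Adj d c <;>
    simp only [ha, hb, hc, if_true, if_false] at da db dc dd
  · omega
  · exact fc_T2 hG h hc (by omega) (by omega) (by omega) (by omega)
  · exact fc_T2 hG h.s2 hb (by omega) (by omega) (by omega) (by omega)
  · have B1 := fun x y => fc_L2 hG h hb hc x y
    have B2 := fun x y => fc_L2 hG h.s2 hc hb x y
    exact fc_T1 hG h hb hc (by grind) (by grind) (by grind) (by grind)
  · exact fc_T2 hG h.s2.s1.s2.s1 ha (by omega) (by omega) (by omega) (by omega)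
  · have B1 := fun x y => fc_L2 hG h.s1 ha hc x y
    have B2 := fun x y => fc_L2 hG h.s1.s2 hc ha x y
    exact fc_T1 hG h.s1 ha hc (by grind) (by grind) (by grind) (by grind)
  · have B1 := fun x y => fc_L2 hG h.s2.s1 ha hb x y
    have B2 := fun x y => fc_L2 hG h.s2.s1.s2 hb ha x y
    exact fc_T1 hG h.s2.s1 ha hb (by grind) (by grind) (by grind) (by grind)
  · have B1 := fun x y => fc_L2 hG h hb hc x y
    have B2 := fun x y => fc_L2 hG h.s2 hc hb x y
    have B3 := fun x y => fc_L2 hG h.s1.s2 hc ha x y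
    have C1 := fun x y z w => fc_T0 hG h ha hb hc x y z w
    have C2 := fun x y z w => fc_T0 hG h.s1 hb ha hc x y z w
    have C3 := fun x y z w => fc_T0 hG h.s2.s1 hc ha hb x y z w
    clear A12 A13 A21 A23 A31 A32
    grind

end

/-- In a `4`-connected graph of order greater than `8` with no forest cut, if `u` is a
vertex of degree `4` whose neighborhood contains a triangle, then the degrees of the
neighbors of `u` sum to at least `19`. -/
theorem degree_sum_of_neighbors_with_triangle
    {V : Type*} [Fintype V] [DecidableEq V] (G : SimpleGraph V) [DecidableRel G.Adj]
    (hconn : KConnected 4 G) (hn : 8 < Fintype.card V)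
    (hnf : ¬ ∃ S : Set V, IsForestCut G S)
    (u : V) (hu : G.degree u = 4)
    (htri : ∃ a ∈ G.neighborSet u, ∃ b ∈ G.neighborSet u, ∃ c ∈ G.neighborSet u,
      G.Adj a b ∧ G.Adj b c ∧ G.Adj a c) :
    19 ≤ ∑ v ∈ G.neighborFinset u, G.degree v := by
  have hG := fc_good G hconn hn hnf
  obtain ⟨a, ha, b, hb, c, hc, hab, hbc, hac⟩ := htri
  have h3 : ({a, b, c} : Finset V).card = 3 :=
    Finset.card_eq_three.2 ⟨a, b, c, hab.ne, hac.ne, hbc.ne, rfl⟩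
  have hsub : ({a, b, c} : Finset V) ⊆ G.neighborFinset u := by
    intro y hy
    simp only [Finset.mem_insert, Finset.mem_singleton] at hy
    rw [SimpleGraph.mem_neighborFinset]
    rcases hy with rfl | rfl | rfl
    · exact ha
    · exact hb
    · exact hc
  have h1 : (G.neighborFinset u \ {a, b, c}).card = 1 := by
    rw [Finset.card_sdiff_of_subset hsub, G.card_neighborFinset_eq_degree, hu, h3]
  obtain ⟨d, hd⟩ := Finset.card_eq_one.1 h1
  have hdm : d ∈ G.neighborFinset u \ {a, b, c} := by simp [hd]
  have hdn : d ≠ a ∧ d ≠ b ∧ d ≠ c := by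
    have := (Finset.mem_sdiff.1 hdm).2
    simpa using this
  have hN : G.neighborFinset u = {a, b, c, d} := by
    rw [← Finset.union_sdiff_of_subset hsub, hd]
    ext y
    simp only [Finset.mem_union, Finset.mem_insert, Finset.mem_singleton]
    tauto
  have h : FCCfg G u a b c d := by
    refine ⟨fun x => ?_, hab.ne, hac.ne, hdn.1.symm, hbc.ne, hdn.2.1.symm, hdn.2.2.symm,
      hab, hac, hbc⟩
    rw [← SimpleGraph.mem_neighborFinset, hN]
    simp
  have := fc_main hG h
  rw [hN, Finset.sum_insert, Finset.sum_insert, Finset.sum_insert, Finset.sum_singleton]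
  · omega
  all_goals simp [h.nab, h.nac, h.nad, h.nbc, h.nbd, h.ncd]
end

section
/- If G is a 4-connected graph of order n greater than 8 that has no forest cut, u is a vertex of G of degree 4, and the neighborhood N_G(u) of u contains no triangle (no three pairwise adjacent vertices), then the sum of the degrees in G of the four neighbors of u is at least 19. -/
/-- A non-acyclic induced subgraph contains a nonempty set of minimum degree at least two. -/
theorem aux_core {V : Type*} [Fintype V] [DecidableEq V] (G : SimpleGraph V) (S : Finset V)
    (h : ¬ (G.induce (S : Set V)).IsAcyclic) :
    ∃ T : Finset V, T ⊆ S ∧ T.Nonempty ∧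
      ∀ x ∈ T, ∃ y ∈ T, ∃ z ∈ T, y ≠ z ∧ G.Adj x y ∧ G.Adj x z := by
  classical
  unfold SimpleGraph.IsAcyclic at h
  push Not at h
  obtain ⟨r, c, hc⟩ := h
  refine ⟨c.support.toFinset.image Subtype.val, ?_, ?_, ?_⟩
  · intro x hx
    simp only [Finset.mem_image] at hx
    obtain ⟨y, _, rfl⟩ := hx
    exact y.2
  · exact ⟨r, by simp⟩
  · intro x hx
    simp only [Finset.mem_image, List.mem_toFinset] at hx
    obtain ⟨x, hx, rfl⟩ := hx
    have h2 := hc.ncard_neighborSet_toSubgraph_eq_two hx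
    rw [Set.ncard_eq_two] at h2
    obtain ⟨y, z, hyz, he⟩ := h2
    have hy : c.toSubgraph.Adj x y := by
      have : y ∈ c.toSubgraph.neighborSet x := by rw [he]; simp
      exact this
    have hz : c.toSubgraph.Adj x z := by
      have : z ∈ c.toSubgraph.neighborSet x := by rw [he]; simp
      exact this
    have hy' := hy.snd_mem
    have hz' := hz.snd_mem
    rw [SimpleGraph.Walk.mem_verts_toSubgraph] at hy' hz'
    refine ⟨y, ?_, z, ?_, fun e => hyz (Subtype.ext e), hy.adj_sub, hz.adj_sub⟩
    · exact Finset.mem_image_of_mem _ (by simpa using hy')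
    · exact Finset.mem_image_of_mem _ (by simpa using hz')

/-- Separating sets have at least four vertices and contain a core. -/
theorem aux_sep {V : Type*} [Fintype V] [DecidableEq V] (G : SimpleGraph V)
    (hconn : KConnected 4 G) (hnf : ¬ ∃ S : Set V, IsForestCut G S)
    (A S : Finset V) (hA : A.Nonempty) (hd : Disjoint A S)
    (hadj : ∀ x ∈ A, ∀ y, G.Adj x y → y ∈ A ∨ y ∈ S)
    (hcard : A.card + S.card < Fintype.card V) :
    4 ≤ S.card ∧ ∃ T : Finset V, T ⊆ S ∧ T.Nonempty ∧
      ∀ x ∈ T, ∃ y ∈ T, ∃ z ∈ T, y ≠ z ∧ G.Adj x y ∧ G.Adj x z := by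
  obtain ⟨a, ha⟩ := hA
  have haS : a ∉ S := Finset.disjoint_left.mp hd ha
  obtain ⟨b, hb⟩ : ∃ b, b ∉ A ∪ S := by
    by_contra hcon
    push Not at hcon
    have : A ∪ S = Finset.univ := Finset.eq_univ_of_forall hcon
    have h1 := Finset.card_union_le A S
    rw [this, Finset.card_univ] at h1
    omega
  rw [Finset.mem_union, not_or] at hb
  have hnr : ¬ (G.induce (S : Set V)ᶜ).Reachable ⟨a, by simpa using haS⟩ ⟨b, by simpa using hb.2⟩ := by
    rintro ⟨p⟩
    have key : ∀ (x y : ↥((S : Set V)ᶜ)), (G.induce (S : Set V)ᶜ).Walk x y →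
        (x : V) ∈ A → (y : V) ∈ A := by
      intro x y p
      induction p with
      | nil => exact id
      | cons h p ih =>
        intro hx
        apply ih
        rcases hadj _ hx _ h with h' | h'
        · exact h'
        · rename_i v _
          exact absurd (Finset.mem_coe.2 h') v.2
    exact hb.1 (key _ _ p ha)
  constructor
  · by_contra hlt
    push Not at hlt
    exact hnr ((hconn.2 S hlt).preconnected _ _)
  · apply aux_core
    intro hac
    exact hnf ⟨S, ⟨_, _, hnr⟩, hac⟩


set_option maxHeartbeats 2000000

/-- In a `4`-connected graph of order greater than `8` with no forest cut, if `u` is a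
vertex of degree `4` whose neighborhood contains no triangle, then the degrees of the
neighbors of `u` sum to at least `19`. -/
theorem degree_sum_of_neighbors_without_triangle
    {V : Type*} [Fintype V] [DecidableEq V] (G : SimpleGraph V) [DecidableRel G.Adj]
    (hconn : KConnected 4 G) (hn : 8 < Fintype.card V)
    (hnf : ¬ ∃ S : Set V, IsForestCut G S)
    (u : V) (hu : G.degree u = 4)
    (htri : ¬ ∃ a ∈ G.neighborSet u, ∃ b ∈ G.neighborSet u, ∃ c ∈ G.neighborSet u,
      G.Adj a b ∧ G.Adj b c ∧ G.Adj a c) :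
    19 ≤ ∑ v ∈ G.neighborFinset u, G.degree v := by
  set N := G.neighborFinset u with hN
  have hNc : N.card = 4 := hu
  have memN : ∀ x, x ∈ N ↔ G.Adj u x := fun x => by simp [hN]
  have huN : u ∉ N := by simp [memN]
  -- no core in `N` minus a vertex
  have hsmall : ∀ v ∈ N, ∀ T : Finset V, T ⊆ N.erase v → T.Nonempty →
      ¬ ∀ x ∈ T, ∃ y ∈ T, ∃ z ∈ T, y ≠ z ∧ G.Adj x y ∧ G.Adj x z := by
    rintro v hv T hT ⟨x, hx⟩ hcore
    have hTc : T.card ≤ 3 := by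
      have := Finset.card_le_card hT
      rw [Finset.card_erase_of_mem hv] at this
      omega
    have hTN : ∀ x ∈ T, G.Adj u x := fun x hx => (memN x).1 (Finset.mem_of_mem_erase (hT hx))
    obtain ⟨y, hy, z, hz, hyz, hxy, hxz⟩ := hcore x hx
    have hsub : ({x, y, z} : Finset V) ⊆ T := by
      intro w hw
      simp only [Finset.mem_insert, Finset.mem_singleton] at hw
      rcases hw with rfl | rfl | rfl <;> assumption
    have h3 : ({x, y, z} : Finset V).card = 3 := by
      rw [Finset.card_eq_three]
      exact ⟨x, y, z, hxy.ne, hxz.ne, hyz, rfl⟩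
    have hTe : ({x, y, z} : Finset V) = T := Finset.eq_of_subset_of_card_le hsub (by omega)
    have hyzadj : G.Adj y z := by
      obtain ⟨p, hp, q, hq, hpq, hyp, hyq⟩ := hcore y hy
      rw [← hTe] at hp hq
      simp only [Finset.mem_insert, Finset.mem_singleton] at hp hq
      have := hyp.ne
      have := hyq.ne
      grind
    exact htri ⟨x, hTN x hx, y, hTN y hy, z, hTN z hz, hxy, hyzadj, hxz⟩
  -- each vertex of `N` has two neighbors in `N`
  have htwo : ∀ v ∈ N, ∃ y ∈ N, ∃ z ∈ N, y ≠ z ∧ G.Adj v y ∧ G.Adj v z := by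
    obtain ⟨_, T, hTN, hTne, hcore⟩ := aux_sep G hconn hnf {u} N (by simp) (by simpa using huN)
      (by intro x hx y hxy
          rw [Finset.mem_singleton] at hx
          subst hx
          exact Or.inr ((memN y).2 hxy))
      (by rw [hNc]; simp; omega)
    have hTe : T = N := by
      by_contra hne
      obtain ⟨v, hv, hvT⟩ := Finset.exists_of_ssubset (hTN.ssubset_of_ne hne)
      exact hsmall v hv T (fun x hx => Finset.mem_erase.2 ⟨fun e => hvT (e ▸ hx), hTN hx⟩) hTne hcore
    rw [← hTe]
    exact hcore
  -- the vertices outside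
  set W : Finset V := (insert u N)ᶜ with hW
  have memW : ∀ x, x ∈ W ↔ x ≠ u ∧ x ∉ N := fun x => by simp [hW]
  set out : V → Finset V := fun v => W.filter (fun w => G.Adj v w) with hout
  have memout : ∀ v w, w ∈ out v ↔ w ∈ W ∧ G.Adj v w := fun v w => by simp [hout]
  have hdeg : ∀ v ∈ N, 3 + (out v).card ≤ G.degree v := by
    intro v hv
    obtain ⟨y, hy, z, hz, hyz, hvy, hvz⟩ := htwo v hv
    have h3 : ({u, y, z} : Finset V).card = 3 := by
      rw [Finset.card_eq_three]
      exact ⟨u, y, z, fun e => huN (e ▸ hy), fun e => huN (e ▸ hz), hyz, rfl⟩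
    have hdis : Disjoint ({u, y, z} : Finset V) (out v) := by
      rw [Finset.disjoint_left]
      intro w hw hw'
      have := (memW w).1 ((memout v w).1 hw').1
      simp only [Finset.mem_insert, Finset.mem_singleton] at hw
      rcases hw with rfl | rfl | rfl <;> tauto
    rw [← h3, ← Finset.card_union_of_disjoint hdis, ← SimpleGraph.card_neighborFinset_eq_degree]
    apply Finset.card_le_card
    intro w hw
    rw [SimpleGraph.mem_neighborFinset]
    simp only [Finset.mem_union, Finset.mem_insert, Finset.mem_singleton, memout] at hw
    rcases hw with (rfl | rfl | rfl) | h
    · exact ((memN v).1 hv).symm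
    · exact hvy
    · exact hvz
    · exact h.2
  have hcases : ∀ v w, G.Adj v w → w = u ∨ w ∈ N ∨ w ∈ out v := by
    intro v w h
    rw [memout, memW]
    tauto
  have hpos : ∀ v ∈ N, 1 ≤ (out v).card := by
    intro v hv
    by_contra h0
    have h0 : out v = ∅ := by rw [← Finset.card_eq_zero]; omega
    have hvu : v ≠ u := fun e => huN (e ▸ hv)
    have hc : (N.erase v).card = 3 := by rw [Finset.card_erase_of_mem hv, hNc]
    have := (aux_sep G hconn hnf {u, v} (N.erase v) (by simp) (by simp [huN])
      (by intro x hx y hxy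
          simp only [Finset.mem_insert, Finset.mem_singleton] at hx
          simp only [Finset.mem_insert, Finset.mem_singleton, Finset.mem_erase]
          rcases hx with rfl | rfl
          · have := (memN y).2 hxy
            tauto
          · have := hcases x y hxy
            simp only [h0, Finset.notMem_empty] at this
            tauto)
      (by have := Finset.card_le_two (a := u) (b := v); omega)).1
    omega
  -- a unique outer neighbor has three neighbors in `N`
  set inn : V → Finset V := fun w => N.filter (fun v => G.Adj v w) with hinn
  have hthree : ∀ v ∈ N, ∀ v', out v = {v'} → 3 ≤ (inn v').card := by
    intro v hv v' hv'
    have hvu : v ≠ u := fun e => huN (e ▸ hv)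
    have hc : (N.erase v).card = 3 := by rw [Finset.card_erase_of_mem hv, hNc]
    have hm : v' ∈ W ∧ G.Adj v v' := by rw [← memout, hv']; simp
    have hmW := (memW v').1 hm.1
    obtain ⟨_, T, hTS, hTne, hcore⟩ := aux_sep G hconn hnf {u, v} (insert v' (N.erase v)) (by simp)
      (by rw [Finset.disjoint_left]
          intro x hx hx'
          simp only [Finset.mem_insert, Finset.mem_singleton, Finset.mem_erase] at hx hx'
          have := hm.2.ne
          grind)
      (by intro x hx y hxy
          simp only [Finset.mem_insert, Finset.mem_singleton] at hx
          simp only [Finset.mem_insert, Finset.mem_singleton, Finset.mem_erase]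
          rcases hx with rfl | rfl
          · have := (memN y).2 hxy
            tauto
          · have := hcases x y hxy
            simp only [hv', Finset.mem_singleton] at this
            tauto)
      (by have := Finset.card_le_two (a := u) (b := v)
          have := Finset.card_insert_le v' (N.erase v)
          omega)
    have hvT : v' ∈ T := by
      by_contra hvT
      refine hsmall v hv T (fun x hx => ?_) hTne hcore
      rcases Finset.mem_insert.1 (hTS hx) with rfl | h
      · exact absurd hx hvT
      · exact h
    obtain ⟨y, hy, z, hz, hyz, hvy, hvz⟩ := hcore v' hvT
    have hy' := Finset.mem_erase.1 (Finset.mem_of_mem_insert_of_ne (hTS hy) hvy.ne')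
    have hz' := Finset.mem_erase.1 (Finset.mem_of_mem_insert_of_ne (hTS hz) hvz.ne')
    have h3 : ({v, y, z} : Finset V).card = 3 := by
      rw [Finset.card_eq_three]
      exact ⟨v, y, z, hy'.1.symm, hz'.1.symm, hyz, rfl⟩
    rw [← h3]
    apply Finset.card_le_card
    intro w hw
    simp only [Finset.mem_insert, Finset.mem_singleton] at hw
    simp only [hinn, Finset.mem_filter]
    rcases hw with rfl | rfl | rfl
    · exact ⟨hv, hm.2⟩
    · exact ⟨hy'.2, hvy.symm⟩
    · exact ⟨hz'.2, hvz.symm⟩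
  have hdouble : ∑ v ∈ N, (out v).card = ∑ w ∈ W, (inn w).card :=
    Finset.sum_card_bipartiteAbove_eq_sum_card_bipartiteBelow (s := N) (t := W) G.Adj
  have hsum : 12 + ∑ v ∈ N, (out v).card ≤ ∑ v ∈ N, G.degree v := by
    have := Finset.sum_le_sum hdeg
    rw [Finset.sum_add_distrib, Finset.sum_const, hNc] at this
    simpa using this
  by_contra hlt
  have h6 : ∑ v ∈ N, (out v).card ≤ 6 := by omega
  have hD : 1 < (N.filter (fun v => (out v).card = 1)).card := by
    have h1 : ∑ v ∈ N, 2 ≤ ∑ v ∈ N, ((out v).card + if (out v).card = 1 then 1 else 0) := by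
      apply Finset.sum_le_sum
      intro v hv
      have := hpos v hv
      split_ifs <;> omega
    rw [Finset.sum_add_distrib, Finset.sum_const, hNc, ← Finset.card_filter, smul_eq_mul] at h1
    omega
  obtain ⟨v, hv, w, hw, hvw⟩ := Finset.one_lt_card.1 hD
  rw [Finset.mem_filter] at hv hw
  obtain ⟨hv, hv1⟩ := hv
  obtain ⟨hw, hw1⟩ := hw
  obtain ⟨v', hv'⟩ := Finset.card_eq_one.1 hv1
  obtain ⟨w', hw'⟩ := Finset.card_eq_one.1 hw1
  have hv3 := hthree v hv v' hv'
  have hw3 := hthree w hw w' hw'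
  have hvm : v' ∈ W ∧ G.Adj v v' := by rw [← memout, hv']; simp
  have hwm : w' ∈ W ∧ G.Adj w w' := by rw [← memout, hw']; simp
  have hvW := (memW v').1 hvm.1
  have hwW := (memW w').1 hwm.1
  have hne : v' ≠ w' := by
    intro e
    subst e
    have hc : ((N.erase v).erase w).card = 2 := by
      rw [Finset.card_erase_of_mem (Finset.mem_erase.2 ⟨hvw.symm, hw⟩),
        Finset.card_erase_of_mem hv, hNc]
    have hc' := Finset.card_insert_le v' ((N.erase v).erase w)
    have := (aux_sep G hconn hnf {u, v, w} (insert v' ((N.erase v).erase w)) (by simp)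
      (by rw [Finset.disjoint_left]
          intro x hx hx'
          simp only [Finset.mem_insert, Finset.mem_singleton, Finset.mem_erase] at hx hx'
          grind)
      (by intro x hx y hxy
          simp only [Finset.mem_insert, Finset.mem_singleton] at hx
          simp only [Finset.mem_insert, Finset.mem_singleton, Finset.mem_erase]
          rcases hx with rfl | rfl | rfl
          · have := (memN y).2 hxy
            tauto
          · have := hcases x y hxy
            simp only [hv', Finset.mem_singleton] at this
            tauto
          · have := hcases x y hxy
            simp only [hw', Finset.mem_singleton] at this
            tauto)
      (by have := Finset.card_le_three (a := u) (b := v) (c := w)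
          omega)).1
    omega
  -- a third outer vertex
  obtain ⟨z, hzW, hzv, hzw, hz1⟩ : ∃ z ∈ W, z ≠ v' ∧ z ≠ w' ∧ 1 ≤ (inn z).card := by
    by_contra hcon
    push Not at hcon
    have hc2 := Finset.card_le_two (a := v') (b := w')
    have := (aux_sep G hconn hnf (insert u N) {v', w'} (by simp)
      (by rw [Finset.disjoint_left]
          intro x hx hx'
          simp only [Finset.mem_insert, Finset.mem_singleton] at hx hx'
          grind)
      (by intro x hx y hxy
          simp only [Finset.mem_insert, Finset.mem_singleton] at hx ⊢
          rcases hx with rfl | hx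
          · have := (memN y).2 hxy
            tauto
          · by_contra hno
            push Not at hno
            have hyW : y ∈ W := (memW y).2 hno.1
            have h0 := hcon y hyW hno.2.1 hno.2.2
            have : 0 < (inn y).card :=
              Finset.card_pos.2 ⟨x, by simp only [hinn, Finset.mem_filter]; exact ⟨hx, hxy⟩⟩
            omega)
      (by have := Finset.card_insert_le u N
          omega)).1
    omega
  have hsub : ({v', w', z} : Finset V) ⊆ W := by
    intro x hx
    simp only [Finset.mem_insert, Finset.mem_singleton] at hx
    rcases hx with rfl | rfl | rfl
    · exact hvm.1
    · exact hwm.1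
    · exact hzW
  have hle := Finset.sum_le_sum_of_subset (f := fun w => (inn w).card) hsub
  rw [Finset.sum_insert (by simp [hne, hzv.symm]), Finset.sum_insert (by simp [hzw.symm]),
    Finset.sum_singleton] at hle
  omega
end
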